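/- arXiv:2005.12013 — 2 statements merged into one kernel-verified Lean document; each statement's English description precedes it below -/
import Mathlib

section
/- Let a, b ∈ ℝ with ab ≠ 0 and consider the piecewise linear vector field Z₀ = (X₀, Y₀) with X₀(x,y) = (ay, x) and Y₀(x,y) = (by, x). Then: (i) if a > 0 or b > 0, Z₀ has no crossing periodic orbit at all; (ii) if a < 0 and b < 0, then for every x₀ > 0 the set {(x,y) : y ≥ 0, x² − a y² = x₀²} ∪ {(x,y) : y ≤ 0, x² − b y² = x₀²} is the image of a crossing periodic orbit of Z₀, and every crossing periodic orbit of Z₀ has its image equal to such a set for some x₀ > 0. In particular, Z₀ has no limit cycle, i.e., no crossing periodic orbit whose image has a neighborhood containing the image of no other crossing periodic orbit. -/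
open Set Filter

noncomputable section


/-- A crossing periodic orbit of the piecewise smooth vector field `Z = (X, Y)`:
a nonconstant continuous periodic curve which solves `ẋ = X(x)` where `y > 0` and
`ẋ = Y(x)` where `y < 0`, meets the switching line `{y = 0}` in a discrete set of
times, and crosses it (`X₂ ⬝ Y₂ > 0`) at each such time. -/
def IsCrossingPeriodicOrbit (X Y : ℝ × ℝ → ℝ × ℝ) (γ : ℝ → ℝ × ℝ) : Prop :=
  Continuous γ ∧ (∃ T > 0, Function.Periodic γ T) ∧ (∃ t s : ℝ, γ t ≠ γ s) ∧
  (∀ t : ℝ, 0 < (γ t).2 → HasDerivAt γ (X (γ t)) t) ∧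
  (∀ t : ℝ, (γ t).2 < 0 → HasDerivAt γ (Y (γ t)) t) ∧
  (∀ t : ℝ, (γ t).2 = 0 → ∃ ε > 0, ∀ s : ℝ, s ≠ t → |s - t| < ε → (γ s).2 ≠ 0) ∧
  (∀ t : ℝ, (γ t).2 = 0 → (X (γ t)).2 * (Y (γ t)).2 > 0)


/-- the second-order force -/
def gfun (a b y : ℝ) : ℝ := a * max y 0 + b * min y 0

theorem gfun_lip (a b : ℝ) : ∃ K : NNReal, LipschitzWith K
    (fun p : ℝ × ℝ => (gfun a b p.2, p.1)) := by
  have h1 : LipschitzWith 1 (fun p : ℝ × ℝ => max p.2 0) := LipschitzWith.prod_snd.max_const 0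
  have h2 : LipschitzWith 1 (fun p : ℝ × ℝ => min p.2 0) := LipschitzWith.prod_snd.min_const 0
  have h3 := (lipschitzWith_smul a).comp h1
  have h4 := (lipschitzWith_smul b).comp h2
  exact ⟨_, (h3.add h4).prodMk LipschitzWith.prod_fst⟩

theorem cross_deriv {a b : ℝ} {γ : ℝ → ℝ × ℝ} (h : IsCrossingPeriodicOrbit
        (fun p : ℝ × ℝ => (a * p.2, p.1)) (fun p : ℝ × ℝ => (b * p.2, p.1)) γ) (t : ℝ) :
    HasDerivAt γ (gfun a b (γ t).2, (γ t).1) t := by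
  obtain ⟨hc, -, -, hX, hY, hd, -⟩ := h
  have key : ∀ s, (γ s).2 ≠ 0 → HasDerivAt γ (gfun a b (γ s).2, (γ s).1) s := by
    intro s hs
    rcases lt_or_gt_of_ne hs with h | h
    · have := hY s h
      simpa [gfun, max_eq_right h.le, min_eq_left h.le] using this
    · have := hX s h
      simpa [gfun, max_eq_left h.le, min_eq_right h.le] using this
  by_cases ht : (γ t).2 = 0
  · obtain ⟨ε, hε, hs⟩ := hd t ht
    obtain ⟨K, hK⟩ := gfun_lip a b
    have hev : ∀ᶠ s in nhdsWithin t {t}ᶜ, HasDerivAt γ (gfun a b (γ s).2, (γ s).1) s := by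
      rw [eventually_nhdsWithin_iff]
      filter_upwards [Metric.ball_mem_nhds t hε] with s hsb hne
      exact key s (hs s hne (by simpa [Real.dist_eq] using hsb))
    have hcont : ContinuousAt (fun s => (gfun a b (γ s).2, (γ s).1)) t :=
      (hK.continuous.comp hc).continuousAt
    have hl : HasDerivWithinAt γ (gfun a b (γ t).2, (γ t).1) (Set.Iic t) t := by
      refine hasDerivWithinAt_Iic_of_tendsto_deriv (s := Set.Ioo (t - ε) t) ?_
        hc.continuousAt.continuousWithinAt (Ioo_mem_nhdsLT (by linarith)) ?_
      · intro s hs'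
        exact (key s (hs s hs'.2.ne (by rw [abs_lt]; constructor <;> linarith [hs'.1, hs'.2]))).differentiableAt.differentiableWithinAt
      · refine (hcont.tendsto.mono_left nhdsWithin_le_nhds).congr' ?_
        filter_upwards [nhdsWithin_mono t (fun x hx => ne_of_lt hx) hev] with s hs'
        exact hs'.deriv.symm
    have hr : HasDerivWithinAt γ (gfun a b (γ t).2, (γ t).1) (Set.Ici t) t := by
      refine hasDerivWithinAt_Ici_of_tendsto_deriv (s := Set.Ioo t (t + ε)) ?_
        hc.continuousAt.continuousWithinAt (Ioo_mem_nhdsGT (by linarith)) ?_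
      · intro s hs'
        exact (key s (hs s hs'.1.ne' (by rw [abs_lt]; constructor <;> linarith [hs'.1, hs'.2]))).differentiableAt.differentiableWithinAt
      · refine (hcont.tendsto.mono_left nhdsWithin_le_nhds).congr' ?_
        filter_upwards [nhdsWithin_mono t (fun x hx => ne_of_gt hx) hev] with s hs'
        exact hs'.deriv.symm
    have := hl.union hr
    rwa [Set.Iic_union_Ici, hasDerivWithinAt_univ] at this
  · exact key t ht

theorem periodic_monotone_const {f : ℝ → ℝ} {T : ℝ} (hT : 0 < T) (hp : Function.Periodic f T)
    (hm : Monotone f) (s t : ℝ) : f s = f t := by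
  have key : ∀ s t, f s ≤ f t := by
    intro s t
    obtain ⟨n, hn⟩ := exists_nat_gt ((s - t) / T)
    rw [div_lt_iff₀ hT] at hn
    have := hp.nat_mul n t
    rw [← this]
    exact hm (by linarith)
  exact le_antisymm (key s t) (key t s)

/-- A periodic function with nonnegative derivative has zero derivative. -/
theorem periodic_deriv_zero {f f' : ℝ → ℝ} {T : ℝ} (hT : 0 < T) (hp : Function.Periodic f T)
    (hd : ∀ t, HasDerivAt f (f' t) t) (hn : ∀ t, 0 ≤ f' t) (t : ℝ) : f' t = 0 := by
  have hm : Monotone f := monotone_of_deriv_nonneg (fun t => (hd t).differentiableAt)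
    (fun t => by rw [(hd t).deriv]; exact hn t)
  have hc : f = fun _ => f t := by
    funext s
    exact periodic_monotone_const hT hp hm s t
  have h := hd t
  rw [hc] at h
  exact h.unique (hasDerivAt_const t _)

theorem part1 {a b : ℝ} (hab : a * b ≠ 0) (h : 0 < a ∨ 0 < b) {γ : ℝ → ℝ × ℝ}
    (hγ : IsCrossingPeriodicOrbit
        (fun p : ℝ × ℝ => (a * p.2, p.1)) (fun p : ℝ × ℝ => (b * p.2, p.1)) γ) : False := by
  have hD := cross_deriv hγ
  have hx : ∀ t, HasDerivAt (fun t => (γ t).1) (gfun a b (γ t).2) t := fun t => (hD t).fst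
  have hy : ∀ t, HasDerivAt (fun t => (γ t).2) (γ t).1 t := fun t => (hD t).snd
  obtain ⟨hc, ⟨T, hT, hp⟩, -, -, -, hd, hcr⟩ := hγ
  have hpx : Function.Periodic (fun t => (γ t).1) T := fun t => by simp [hp t]
  have hpy : Function.Periodic (fun t => (γ t).2) T := fun t => by simp [hp t]
  have ha : a ≠ 0 := left_ne_zero_of_mul hab
  have hb : b ≠ 0 := right_ne_zero_of_mul hab
  -- it is enough to show that `y` vanishes identically
  have main : ∀ t, (γ t).2 ≠ 0 → False := by
    intro t ht
    have hsgn : (0 < a ∧ 0 < b) ∨ (0 < a ∧ b < 0) ∨ (a < 0 ∧ 0 < b) := by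
      rcases lt_or_gt_of_ne ha with h1 | h1 <;> rcases lt_or_gt_of_ne hb with h2 | h2
      · rcases h with h | h <;> linarith
      · tauto
      · tauto
      · tauto
    have hg : ∀ y, gfun a b y = if 0 ≤ y then a * y else b * y := by
      intro y
      unfold gfun
      split_ifs with hy0
      · simp [hy0]
      · have := (not_le.mp hy0).le
        simp [this]
    rcases hsgn with ⟨h1, h2⟩ | ⟨h1, h2⟩ | ⟨h1, h2⟩
    · have hpos : ∀ y, y ≠ 0 → 0 < gfun a b y * y := by
        intro y hy0
        rw [hg]
        have := mul_self_pos.mpr hy0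
        split_ifs
        · nlinarith [mul_pos h1 this]
        · nlinarith [mul_pos h2 this]
      have hnn : ∀ y, 0 ≤ gfun a b y * y := by
        intro y
        by_cases hy0 : y = 0
        · simp [hy0]
        · exact (hpos y hy0).le
      have := periodic_deriv_zero hT (hpx.mul hpy) (fun t => (hx t).mul (hy t))
        (fun t => add_nonneg (hnn _) (mul_self_nonneg _)) t
      nlinarith [hpos _ ht, mul_self_nonneg (γ t).1]
    · have := periodic_deriv_zero hT hpx hx (fun t => by
        rw [hg]; split_ifs with h0
        · positivity
        · nlinarith) t
      rw [hg] at this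
      split_ifs at this
      · exact (mul_ne_zero ha ht) this
      · exact (mul_ne_zero hb ht) this
    · have := periodic_deriv_zero hT (f := fun t => -(γ t).1) (fun t => by simp [hp t])
        (fun t => (hx t).neg) (fun t => by
        rw [hg]; split_ifs with h0
        · nlinarith
        · nlinarith) t
      rw [neg_eq_zero, hg] at this
      split_ifs at this
      · exact (mul_ne_zero ha ht) this
      · exact (mul_ne_zero hb ht) this
  have hz : ∀ t, (γ t).2 = 0 := fun t => by_contra (main t)
  obtain ⟨ε, hε, h'⟩ := hd 0 (hz 0)
  exact h' (ε / 2) (by positivity) (by rw [sub_zero, abs_of_pos] <;> linarith) (hz _)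

theorem part3 {a b : ℝ} {γ : ℝ → ℝ × ℝ}
    (hγ : IsCrossingPeriodicOrbit
        (fun p : ℝ × ℝ => (a * p.2, p.1)) (fun p : ℝ × ℝ => (b * p.2, p.1)) γ)
    {V : Set (ℝ × ℝ)} (hV : IsOpen V) (hsub : Set.range γ ⊆ V) :
    ∃ γ' : ℝ → ℝ × ℝ, IsCrossingPeriodicOrbit
        (fun p : ℝ × ℝ => (a * p.2, p.1)) (fun p : ℝ × ℝ => (b * p.2, p.1)) γ' ∧
      Set.range γ' ⊆ V ∧ Set.range γ' ≠ Set.range γ := by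
  obtain ⟨hc, ⟨T, hT, hp⟩, ⟨t₀, s₀, hne⟩, hX, hY, hd, hcr⟩ := hγ
  have hK : IsCompact (Set.range γ) := by
    rw [← hp.image_Icc hT 0]
    exact isCompact_Icc.image hc
  obtain ⟨p, hpK, hpm⟩ := hK.exists_isMaxOn ⟨γ 0, Set.mem_range_self 0⟩ continuous_norm.continuousOn
  have hpm' : ∀ t, ‖γ t‖ ≤ ‖p‖ := fun t => hpm (Set.mem_range_self t)
  have hp0 : 0 < ‖p‖ := by
    by_contra hcon
    have hz : ∀ t, γ t = 0 := fun t => norm_le_zero_iff.mp ((hpm' t).trans (not_lt.mp hcon))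
    exact hne (by rw [hz, hz])
  have hlam : ∃ l : ℝ, 1 < l ∧ ∀ t, l • γ t ∈ V := by
    have hop : IsOpen ((fun q : ℝ × (ℝ × ℝ) => q.1 • q.2) ⁻¹' V) :=
      hV.preimage (continuous_fst.smul continuous_snd)
    obtain ⟨u, v, hu, hv, h1, h2, h3⟩ := generalized_tube_lemma (isCompact_singleton (x := (1 : ℝ))) hK hop
      (by rintro ⟨l, q⟩ ⟨hl, hq⟩
          have : l = 1 := hl
          subst this
          simpa using hsub hq)
    have hu1 : u ∈ nhds (1 : ℝ) := hu.mem_nhds (h1 rfl)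
    obtain ⟨ε, hε, hb⟩ := Metric.mem_nhds_iff.mp hu1
    refine ⟨1 + ε / 2, by linarith, fun t => ?_⟩
    have : ((1 + ε / 2 : ℝ), γ t) ∈ u ×ˢ v :=
      ⟨hb (by simp [abs_of_pos hε]; linarith), h2 (Set.mem_range_self t)⟩
    exact h3 this
  obtain ⟨l, hl, hlV⟩ := hlam
  have hl0 : 0 < l := by linarith
  refine ⟨fun t => l • γ t, ⟨hc.const_smul l, ⟨T, hT, fun t => by simp [hp t]⟩, ⟨t₀, s₀, ?_⟩, ?_, ?_, ?_, ?_⟩, ?_, ?_⟩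
  · intro h
    exact hne (smul_right_injective _ hl0.ne' h)
  · intro t ht
    have ht' : 0 < (γ t).2 := by simpa [hl0] using ht
    have := (hX t ht').const_smul l
    refine this.congr_deriv ?_
    ext
    · simp
      ring
    · simp
  · intro t ht
    have ht' : (γ t).2 < 0 := by
      have : l * (γ t).2 < 0 := ht
      by_contra hcon
      nlinarith [mul_nonneg hl0.le (not_lt.mp hcon)]
    have := (hY t ht').const_smul l
    refine this.congr_deriv ?_
    ext
    · simp
      ring
    · simp
  · intro t ht
    have ht' : (γ t).2 = 0 := by simpa [hl0.ne'] using ht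
    obtain ⟨ε, hε, h⟩ := hd t ht'
    refine ⟨ε, hε, fun s h1 h2 => ?_⟩
    simpa [hl0.ne'] using h s h1 h2
  · intro t ht
    have ht' : (γ t).2 = 0 := by simpa [hl0.ne'] using ht
    have := hcr t ht'
    have h3 : 0 < (l * l) * ((γ t).1 * (γ t).1) := mul_pos (mul_pos hl0 hl0) this
    simp only [Prod.smul_fst, smul_eq_mul]
    nlinarith
  · rintro _ ⟨t, rfl⟩
    exact hlV t
  · intro heq
    obtain ⟨t, ht⟩ := hpK
    have : l • p ∈ Set.range γ := heq ▸ ⟨t, by simp [ht]⟩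
    obtain ⟨s, hs⟩ := this
    have h1 := hpm' s
    rw [hs, norm_smul, Real.norm_of_nonneg hl0.le] at h1
    nlinarith

theorem tri_lip (x y : ℝ) : Real.arccos (Real.cos x) ≤ Real.arccos (Real.cos y) + |x - y| := by
  set v := Real.arccos (Real.cos y) with hv
  set d := |x - y| with hd
  have hv0 : 0 ≤ v := Real.arccos_nonneg _
  have hd0 : 0 ≤ d := abs_nonneg _
  rcases le_total Real.pi (v + d) with h | h
  · exact (Real.arccos_le_pi _).trans h
  · rw [← Real.arccos_cos (by positivity : 0 ≤ v + d) h]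
    apply Real.antitone_arccos
    have h1 : Real.cos v = Real.cos y := Real.cos_arccos (Real.neg_one_le_cos y) (Real.cos_le_one y)
    have h2 : Real.sin v = |Real.sin y| := by
      rw [hv, Real.sin_arccos, ← Real.abs_sin_eq_sqrt_one_sub_cos_sq]
    have h3 : Real.cos d = Real.cos (x - y) := Real.cos_abs _
    have h4 : 0 ≤ Real.sin d := Real.sin_nonneg_of_nonneg_of_le_pi hd0 (by linarith)
    have h5 : Real.sin d = |Real.sin (x - y)| := by
      rw [← abs_of_nonneg h4, hd]
      rcases abs_choice (x - y) with h | h <;> rw [h]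
      rw [Real.sin_neg, abs_neg]
    have h6 : Real.cos x = Real.cos y * Real.cos (x - y) - Real.sin y * Real.sin (x - y) := by
      rw [← Real.cos_add]; congr 1; ring
    rw [Real.cos_add, h1, h2, h3, h5, h6, ← abs_mul]
    linarith [le_abs_self (Real.sin y * Real.sin (x - y))]

theorem tri_deriv {x : ℝ} (hx : Real.sin x ≠ 0) :
    HasDerivAt (fun x => Real.arccos (Real.cos x)) (Real.sin x / |Real.sin x|) x := by
  have hne : Real.cos x ^ 2 ≠ 1 := by
    intro h
    have := Real.sin_sq_add_cos_sq x
    exact hx (pow_eq_zero_iff (two_ne_zero) |>.mp (by linarith))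
  have := (Real.hasDerivAt_arccos (x := Real.cos x) (by rintro h; simp [h] at hne)
    (by rintro h; simp [h] at hne)).comp x (Real.hasDerivAt_cos x)
  refine this.congr_deriv ?_
  rw [← Real.abs_sin_eq_sqrt_one_sub_cos_sq]
  ring

theorem theta_exists {α β : ℝ} (hα : 0 < α) (hβ : 0 < β) : ∃ θ : ℝ → ℝ, Continuous θ ∧
    Function.Injective θ ∧ Function.Surjective θ ∧ (∃ T > 0, ∀ t, θ (t + T) = θ t + 2 * Real.pi) ∧
    (∀ t, 0 < Real.sin (θ t) → HasDerivAt θ α t) ∧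
    (∀ t, Real.sin (θ t) < 0 → HasDerivAt θ β t) := by
  set A := (α⁻¹ + β⁻¹) / 2 with hA
  set B := (α⁻¹ - β⁻¹) / 2 with hB
  have hAB : A + B = α⁻¹ := by rw [hA, hB]; ring
  have hAB' : A - B = β⁻¹ := by rw [hA, hB]; ring
  have hα' : 0 < A + B := by rw [hAB]; positivity
  have hβ' : 0 < A - B := by rw [hAB']; positivity
  have hA0 : 0 < A := by linarith
  set τ : ℝ → ℝ := fun x => A * x + B * Real.arccos (Real.cos x) with hτ
  have hmono : StrictMono τ := by
    intro x y hxy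
    have h1 := tri_lip x y
    have h2 := tri_lip y x
    rw [abs_of_neg (by linarith)] at h1
    rw [abs_of_pos (by linarith)] at h2
    simp only [hτ]
    generalize Real.arccos (Real.cos x) = u at *
    generalize Real.arccos (Real.cos y) = v at *
    have e1 : 0 ≤ (A + B) * ((y - x) + (v - u)) := mul_nonneg hα'.le (by linarith)
    have e2 : 0 ≤ (A - B) * ((y - x) - (v - u)) := mul_nonneg hβ'.le (by linarith)
    rcases lt_or_ge u v with h | h
    · have e1 : 0 < (A + B) * ((y - x) + (v - u)) := mul_pos hα' (by linarith)
      nlinarith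
    · have e2 : 0 < (A - B) * ((y - x) - (v - u)) := mul_pos hβ' (by linarith)
      nlinarith
  have hcont : Continuous τ := by
    have := Real.continuous_arccos.comp Real.continuous_cos
    exact (continuous_const.mul continuous_id).add (continuous_const.mul this)
  have hbd : ∀ x, |B * Real.arccos (Real.cos x)| ≤ |B| * Real.pi := by
    intro x
    rw [abs_mul, abs_of_nonneg (Real.arccos_nonneg _)]
    exact mul_le_mul_of_nonneg_left (Real.arccos_le_pi _) (abs_nonneg _)
  have hsurj : Function.Surjective τ := by
    intro c
    apply mem_range_of_exists_le_of_exists_ge hcont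
    · refine ⟨(c - |B| * Real.pi) / A, ?_⟩
      have := (abs_le.mp (hbd ((c - |B| * Real.pi) / A))).2
      simp only [hτ]
      rw [mul_div_cancel₀ _ hA0.ne']
      linarith
    · refine ⟨(c + |B| * Real.pi) / A, ?_⟩
      have := (abs_le.mp (hbd ((c + |B| * Real.pi) / A))).1
      simp only [hτ]
      rw [mul_div_cancel₀ _ hA0.ne']
      linarith
  let e := StrictMono.orderIsoOfSurjective τ hmono hsurj
  have he : ∀ t, τ (e.symm t) = t := fun t => e.apply_symm_apply t
  have hec : Continuous e.symm := e.symm.continuous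
  have hsin : ∀ x, Real.sin x ≠ 0 → HasDerivAt τ (A * 1 + B * (Real.sin x / |Real.sin x|)) x := by
    intro x hx
    exact ((hasDerivAt_id x).const_mul A).add ((tri_deriv hx).const_mul B)
  refine ⟨e.symm, hec, e.symm.injective, e.symm.surjective, ⟨A * (2 * Real.pi), by positivity, ?_⟩, ?_, ?_⟩
  · intro t
    apply hmono.injective
    rw [he]
    simp only [hτ, Real.cos_add_two_pi]
    have := he t
    simp only [hτ] at this
    linarith
  · intro t ht
    have h := hsin _ ht.ne'
    rw [abs_of_pos ht, div_self ht.ne', mul_one, mul_one, hAB] at h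
    have := HasDerivAt.of_local_left_inverse hec.continuousAt h (by positivity)
      (Eventually.of_forall he)
    simpa using this
  · intro t ht
    have h := hsin _ ht.ne
    rw [abs_of_neg ht, div_neg, div_self ht.ne, mul_one, mul_neg, mul_one, ← sub_eq_add_neg, hAB'] at h
    have := HasDerivAt.of_local_left_inverse hec.continuousAt h (by positivity)
      (Eventually.of_forall he)
    simpa using this

theorem level_angle {c r : ℝ} (hr : 0 < r) {x y : ℝ} (h : x ^ 2 + (c * y) ^ 2 = r ^ 2) :
    ∃ φ, x = r * Real.cos φ ∧ c * y = r * Real.sin φ := by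
  set z : ℂ := ⟨x, c * y⟩ with hz
  have hn : ‖z‖ = r := by
    rw [Complex.norm_eq_sqrt_sq_add_sq, hz, h, Real.sqrt_sq hr.le]
  refine ⟨z.arg, ?_, ?_⟩
  · rw [← hn, Complex.norm_mul_cos_arg]
  · rw [← hn, Complex.norm_mul_sin_arg]

theorem part2 {α β : ℝ} (hα : 0 < α) (hβ : 0 < β) {r : ℝ} (hr : 0 < r) : ∃ γ : ℝ → ℝ × ℝ,
        IsCrossingPeriodicOrbit
          (fun p : ℝ × ℝ => (-α ^ 2 * p.2, p.1)) (fun p : ℝ × ℝ => (-β ^ 2 * p.2, p.1)) γ ∧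
        Set.range γ =
          {p : ℝ × ℝ | 0 ≤ p.2 ∧ p.1 ^ 2 - (-α ^ 2) * p.2 ^ 2 = r ^ 2} ∪
          {p : ℝ × ℝ | p.2 ≤ 0 ∧ p.1 ^ 2 - (-β ^ 2) * p.2 ^ 2 = r ^ 2} := by
  obtain ⟨θ, hc, hinj, hsurj, ⟨T, hT, hp⟩, hpos, hneg⟩ := theta_exists hα hβ
  set γ : ℝ → ℝ × ℝ := fun t => (r * Real.cos (θ t),
    r * (max (Real.sin (θ t)) 0 / α + min (Real.sin (θ t)) 0 / β)) with hγ
  have hge : ∀ t, 0 ≤ Real.sin (θ t) → γ t = (r * Real.cos (θ t), r * (Real.sin (θ t) / α)) := by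
    intro t ht
    simp [hγ, ht]
  have hle : ∀ t, Real.sin (θ t) ≤ 0 → γ t = (r * Real.cos (θ t), r * (Real.sin (θ t) / β)) := by
    intro t ht
    simp [hγ, ht]
  have spos : ∀ t, 0 < (γ t).2 → 0 < Real.sin (θ t) := by
    intro t ht
    by_contra hcon
    rw [hle t (not_lt.mp hcon)] at ht
    have : r * (Real.sin (θ t) / β) ≤ 0 :=
      mul_nonpos_of_nonneg_of_nonpos hr.le (div_nonpos_of_nonpos_of_nonneg (not_lt.mp hcon) hβ.le)
    exact absurd ht (not_lt.mpr this)
  have sneg : ∀ t, (γ t).2 < 0 → Real.sin (θ t) < 0 := by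
    intro t ht
    by_contra hcon
    rw [hge t (not_lt.mp hcon)] at ht
    have : 0 ≤ r * (Real.sin (θ t) / α) :=
      mul_nonneg hr.le (div_nonneg (not_lt.mp hcon) hα.le)
    exact absurd ht (not_lt.mpr this)
  have szero : ∀ t, (γ t).2 = 0 ↔ Real.sin (θ t) = 0 := by
    intro t
    rcases le_total 0 (Real.sin (θ t)) with h | h
    · rw [hge t h]; simp [hr.ne', hα.ne']
    · rw [hle t h]; simp [hr.ne', hβ.ne']
  have hsc : Continuous fun t => Real.sin (θ t) := Real.continuous_sin.comp hc
  refine ⟨γ, ⟨?_, ⟨T, hT, ?_⟩, ?_, ?_, ?_, ?_, ?_⟩, ?_⟩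
  · have hcc : Continuous fun t => Real.cos (θ t) := Real.continuous_cos.comp hc
    fun_prop
  · intro t
    simp [hγ, hp]
  · obtain ⟨t, ht⟩ := hsurj 0
    obtain ⟨s, hs⟩ := hsurj Real.pi
    refine ⟨t, s, fun h => ?_⟩
    have := congrArg Prod.fst h
    simp [hγ, ht, hs] at this
    linarith
  · intro t ht
    have hs := spos t ht
    have hd := hpos t hs
    have h1 : HasDerivAt (fun t => (r * Real.cos (θ t), r * (Real.sin (θ t) / α)))
        (r * (-Real.sin (θ t) * α), r * (Real.cos (θ t) * α / α)) t :=
      (hd.cos.const_mul r).prodMk ((hd.sin.div_const α).const_mul r)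
    have h2 : γ =ᶠ[nhds t] (fun t => (r * Real.cos (θ t), r * (Real.sin (θ t) / α))) := by
      filter_upwards [hsc.continuousAt.eventually (lt_mem_nhds hs)] with s hs'
      exact hge s (le_of_lt hs')
    refine (h1.congr_of_eventuallyEq h2).congr_deriv ?_
    rw [hge t hs.le]
    ext <;> simp only [] <;> field_simp
  · intro t ht
    have hs := sneg t ht
    have hd := hneg t hs
    have h1 : HasDerivAt (fun t => (r * Real.cos (θ t), r * (Real.sin (θ t) / β)))
        (r * (-Real.sin (θ t) * β), r * (Real.cos (θ t) * β / β)) t :=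
      (hd.cos.const_mul r).prodMk ((hd.sin.div_const β).const_mul r)
    have h2 : γ =ᶠ[nhds t] (fun t => (r * Real.cos (θ t), r * (Real.sin (θ t) / β))) := by
      filter_upwards [hsc.continuousAt.eventually (gt_mem_nhds hs)] with s hs'
      exact hle s (le_of_lt hs')
    refine (h1.congr_of_eventuallyEq h2).congr_deriv ?_
    rw [hle t hs.le]
    ext <;> simp only [] <;> field_simp
  · intro t ht
    rw [szero] at ht
    have hcos : Real.cos (θ t) ≠ 0 := by
      intro h
      have := Real.sin_sq_add_cos_sq (θ t)
      rw [ht, h] at this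
      norm_num at this
    have h1 := (Real.hasDerivAt_sin (θ t)).tendsto_nhdsNE hcos
    rw [ht] at h1
    have h2 : Tendsto θ (nhdsWithin t {t}ᶜ) (nhdsWithin (θ t) {θ t}ᶜ) :=
      hc.continuousAt.continuousWithinAt.tendsto_nhdsWithin (fun s hs h => hs (hinj h))
    have h3 := (h1.comp h2).eventually self_mem_nhdsWithin
    rw [eventually_nhdsWithin_iff, Metric.eventually_nhds_iff] at h3
    obtain ⟨ε, hε, h4⟩ := h3
    refine ⟨ε, hε, fun s hs hlt h => ?_⟩
    exact h4 (by rwa [Real.dist_eq]) hs ((szero s).mp h)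
  · intro t ht
    rw [szero] at ht
    have hcos : Real.cos (θ t) ≠ 0 := by
      intro h
      have := Real.sin_sq_add_cos_sq (θ t)
      rw [ht, h] at this
      norm_num at this
    exact mul_self_pos.mpr (mul_ne_zero hr.ne' hcos)
  · ext ⟨x, y⟩
    constructor
    · rintro ⟨t, ht⟩
      have hsc := Real.sin_sq_add_cos_sq (θ t)
      rcases le_total 0 (Real.sin (θ t)) with h | h
      · left
        rw [hge t h, Prod.mk.injEq] at ht
        obtain ⟨rfl, rfl⟩ := ht
        refine ⟨mul_nonneg hr.le (div_nonneg h hα.le), ?_⟩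
        have : r ^ 2 = r ^ 2 * (Real.sin (θ t) ^ 2 + Real.cos (θ t) ^ 2) := by rw [hsc, mul_one]
        rw [this]
        field_simp
        ring
      · right
        rw [hle t h, Prod.mk.injEq] at ht
        obtain ⟨rfl, rfl⟩ := ht
        refine ⟨mul_nonpos_of_nonneg_of_nonpos hr.le (div_nonpos_of_nonpos_of_nonneg h hβ.le), ?_⟩
        have : r ^ 2 = r ^ 2 * (Real.sin (θ t) ^ 2 + Real.cos (θ t) ^ 2) := by rw [hsc, mul_one]
        rw [this]
        field_simp
        ring
    · rintro (⟨hy, h⟩ | ⟨hy, h⟩)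
      · simp only at hy h
        obtain ⟨φ, h1, h2⟩ := level_angle (c := α) hr (x := x) (y := y) (by linarith)
        obtain ⟨t, rfl⟩ := hsurj φ
        refine ⟨t, ?_⟩
        have hs : 0 ≤ Real.sin (θ t) := nonneg_of_mul_nonneg_right (h2 ▸ mul_nonneg hα.le hy) hr
        rw [hge t hs, Prod.mk.injEq]
        refine ⟨h1.symm, ?_⟩
        rw [← mul_div_assoc, ← h2]
        field_simp
      · simp only at hy h
        obtain ⟨φ, h1, h2⟩ := level_angle (c := β) hr (x := x) (y := y) (by linarith)
        obtain ⟨t, rfl⟩ := hsurj φ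
        refine ⟨t, ?_⟩
        have hs : Real.sin (θ t) ≤ 0 := by
          have : r * Real.sin (θ t) ≤ 0 := h2 ▸ mul_nonpos_of_nonneg_of_nonpos hβ.le hy
          by_contra hcon
          nlinarith [mul_pos hr (not_le.mp hcon)]
        rw [hle t hs, Prod.mk.injEq]
        refine ⟨h1.symm, ?_⟩
        rw [← mul_div_assoc, ← h2]
        field_simp

theorem exists_zero {a b : ℝ} (ha : a < 0) (hb : b < 0) {γ : ℝ → ℝ × ℝ}
    (hγ : IsCrossingPeriodicOrbit
        (fun p : ℝ × ℝ => (a * p.2, p.1)) (fun p : ℝ × ℝ => (b * p.2, p.1)) γ) :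
    ∃ t, (γ t).2 = 0 := by
  by_contra hcon
  push Not at hcon
  obtain ⟨hc, ⟨T, hT, hp⟩, -, hX, hY, -, -⟩ := hγ
  have hcy : Continuous fun t => (γ t).2 := continuous_snd.comp hc
  have hsg : (∀ t, 0 < (γ t).2) ∨ (∀ t, (γ t).2 < 0) := by
    by_contra h
    push Not at h
    obtain ⟨⟨s, hs⟩, ⟨t, ht⟩⟩ := h
    obtain ⟨u, hu⟩ := mem_range_of_exists_le_of_exists_ge hcy ⟨s, hs⟩ ⟨t, ht⟩
    exact hcon u hu
  rcases hsg with h | h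
  · have hx : ∀ t, HasDerivAt (fun t => (γ t).1) (a * (γ t).2) t := fun t => (hX t (h t)).fst
    have := periodic_deriv_zero hT (f := fun t => -(γ t).1) (fun t => by simp [hp t])
      (fun t => (hx t).neg) (fun t => by have := h t; nlinarith) 0
    have h0 := h 0
    nlinarith
  · have hx : ∀ t, HasDerivAt (fun t => (γ t).1) (b * (γ t).2) t := fun t => (hY t (h t)).fst
    have := periodic_deriv_zero hT (f := fun t => (γ t).1) (fun t => by simp [hp t])
      hx (fun t => by have := h t; nlinarith) 0
    have h0 := h 0
    nlinarith

theorem range_eq_of_meet {a b : ℝ} {γ δ : ℝ → ℝ × ℝ}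
    (hγ : IsCrossingPeriodicOrbit
        (fun p : ℝ × ℝ => (a * p.2, p.1)) (fun p : ℝ × ℝ => (b * p.2, p.1)) γ)
    (hδ : IsCrossingPeriodicOrbit
        (fun p : ℝ × ℝ => (a * p.2, p.1)) (fun p : ℝ × ℝ => (b * p.2, p.1)) δ)
    {t s : ℝ} (h : γ t = δ s) : Set.range γ = Set.range δ := by
  obtain ⟨K, hK⟩ := gfun_lip a b
  have e : (fun u => γ (u + t)) = fun u => δ (u + s) := by
    refine ODE_solution_unique_univ (t₀ := 0) (s := fun _ => Set.univ)
      (v := fun _ => fun p : ℝ × ℝ => (gfun a b p.2, p.1)) (K := K)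
      (fun _ => hK.lipschitzOnWith) (fun u => ⟨?_, Set.mem_univ _⟩) (fun u => ⟨?_, Set.mem_univ _⟩)
      (by simpa using h)
    · exact (cross_deriv hγ (u + t)).comp_add_const u t
    · exact (cross_deriv hδ (u + s)).comp_add_const u s
  have hr : ∀ (f : ℝ → ℝ × ℝ) (c : ℝ), Set.range (fun u => f (u + c)) = Set.range f := by
    intro f c
    exact (Equiv.addRight c).surjective.range_comp f
  rw [← hr γ t, ← hr δ s, e]

/-- The piecewise linear vector field `Z₀ = ((ay, x), (by, x))`, `ab ≠ 0`: if `a > 0` or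
`b > 0` it has no crossing periodic orbit; if `a < 0` and `b < 0` its crossing periodic
orbits are exactly the curves `{y ≥ 0, x² − ay² = x₀²} ∪ {y ≤ 0, x² − by² = x₀²}`,
`x₀ > 0`. In particular `Z₀` has no limit cycle (no isolated crossing periodic orbit). -/
theorem stmt12 (a b : ℝ) (hab : a * b ≠ 0) :
    ((0 < a ∨ 0 < b) →
      ¬ ∃ γ : ℝ → ℝ × ℝ, IsCrossingPeriodicOrbit
        (fun p : ℝ × ℝ => (a * p.2, p.1)) (fun p : ℝ × ℝ => (b * p.2, p.1)) γ) ∧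
    ((a < 0 ∧ b < 0) →
      (∀ x₀ : ℝ, 0 < x₀ → ∃ γ : ℝ → ℝ × ℝ,
        IsCrossingPeriodicOrbit
          (fun p : ℝ × ℝ => (a * p.2, p.1)) (fun p : ℝ × ℝ => (b * p.2, p.1)) γ ∧
        Set.range γ =
          {p : ℝ × ℝ | 0 ≤ p.2 ∧ p.1 ^ 2 - a * p.2 ^ 2 = x₀ ^ 2} ∪
          {p : ℝ × ℝ | p.2 ≤ 0 ∧ p.1 ^ 2 - b * p.2 ^ 2 = x₀ ^ 2}) ∧
      (∀ γ : ℝ → ℝ × ℝ,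
        IsCrossingPeriodicOrbit
          (fun p : ℝ × ℝ => (a * p.2, p.1)) (fun p : ℝ × ℝ => (b * p.2, p.1)) γ →
        ∃ x₀ > (0 : ℝ), Set.range γ =
          {p : ℝ × ℝ | 0 ≤ p.2 ∧ p.1 ^ 2 - a * p.2 ^ 2 = x₀ ^ 2} ∪
          {p : ℝ × ℝ | p.2 ≤ 0 ∧ p.1 ^ 2 - b * p.2 ^ 2 = x₀ ^ 2})) ∧
    ¬ ∃ γ : ℝ → ℝ × ℝ,
      IsCrossingPeriodicOrbit
        (fun p : ℝ × ℝ => (a * p.2, p.1)) (fun p : ℝ × ℝ => (b * p.2, p.1)) γ ∧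
      ∃ V : Set (ℝ × ℝ), IsOpen V ∧ Set.range γ ⊆ V ∧
        ∀ γ' : ℝ → ℝ × ℝ,
          IsCrossingPeriodicOrbit
            (fun p : ℝ × ℝ => (a * p.2, p.1)) (fun p : ℝ × ℝ => (b * p.2, p.1)) γ' →
          Set.range γ' ⊆ V → Set.range γ' = Set.range γ := by
  have hex : (a < 0 ∧ b < 0) → ∀ x₀ : ℝ, 0 < x₀ → ∃ γ : ℝ → ℝ × ℝ,
        IsCrossingPeriodicOrbit
          (fun p : ℝ × ℝ => (a * p.2, p.1)) (fun p : ℝ × ℝ => (b * p.2, p.1)) γ ∧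
        Set.range γ =
          {p : ℝ × ℝ | 0 ≤ p.2 ∧ p.1 ^ 2 - a * p.2 ^ 2 = x₀ ^ 2} ∪
          {p : ℝ × ℝ | p.2 ≤ 0 ∧ p.1 ^ 2 - b * p.2 ^ 2 = x₀ ^ 2} := by
    rintro ⟨ha, hb⟩ x₀ hx
    have h := part2 (Real.sqrt_pos.mpr (neg_pos.mpr ha)) (Real.sqrt_pos.mpr (neg_pos.mpr hb)) hx
    rw [Real.sq_sqrt (neg_pos.mpr ha).le, Real.sq_sqrt (neg_pos.mpr hb).le, neg_neg, neg_neg] at h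
    exact h
  refine ⟨?_, ?_, ?_⟩
  · rintro h ⟨γ, hγ⟩
    exact part1 hab h hγ
  · intro hneg
    refine ⟨hex hneg, ?_⟩
    intro γ hγ
    obtain ⟨t, ht⟩ := exists_zero hneg.1 hneg.2 hγ
    have hne : (γ t).1 ≠ 0 := by
      have := hγ.2.2.2.2.2.2 t ht
      exact left_ne_zero_of_mul (ne_of_gt this)
    have hx : 0 < |(γ t).1| := abs_pos.mpr hne
    obtain ⟨δ, hδ, hr⟩ := hex hneg _ hx
    refine ⟨_, hx, ?_⟩
    rw [← hr]
    have hm : γ t ∈ Set.range δ := by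
      rw [hr]
      left
      refine ⟨ht.ge, ?_⟩
      rw [ht, sq_abs]
      ring
    obtain ⟨s, hs⟩ := hm
    exact range_eq_of_meet hγ hδ hs.symm
  · rintro ⟨γ, hγ, V, hV, hsub, h⟩
    obtain ⟨γ', h1, h2, h3⟩ := part3 hγ hV hsub
    exact h3 (h γ' h1 h2)
end
end

section
/- Let Z=(X,Y) ∈ Ω₀ be a piecewise smooth vector field. Then for every δ > 0 there exist C¹ vector fields X̃, Ỹ on U with sup_{p∈B}(‖X(p) − X̃(p)‖ + ‖DX(p) − DX̃(p)‖) < δ and sup_{p∈B}(‖Y(p) − Ỹ(p)‖ + ‖DY(p) − DỸ(p)‖) < δ on a fixed closed ball B ⊆ U centered at the origin, such that the piecewise smooth vector field Z̃ = (X̃, Ỹ) has a crossing periodic orbit whose image is contained in the open ball of radius δ around the origin and which is isolated, i.e., its image has a neighborhood containing the image of no other crossing periodic orbit of Z̃ (a crossing limit cycle bifurcating from the origin). -/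
open Set Filter

noncomputable section

/-- Entry (1,1) of the Jacobian matrix of `X` at the origin. -/
noncomputable def jac11 (X : ℝ × ℝ → ℝ × ℝ) : ℝ := (fderiv ℝ X (0, 0) (1, 0)).1
/-- Entry (1,2) of the Jacobian matrix of `X` at the origin. -/
noncomputable def jac12 (X : ℝ × ℝ → ℝ × ℝ) : ℝ := (fderiv ℝ X (0, 0) (0, 1)).1
/-- Entry (2,1) of the Jacobian matrix of `X` at the origin, i.e. `∂ₓX₂(0,0)`. -/
noncomputable def jac21 (X : ℝ × ℝ → ℝ × ℝ) : ℝ := (fderiv ℝ X (0, 0) (1, 0)).2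
/-- Entry (2,2) of the Jacobian matrix of `X` at the origin. -/
noncomputable def jac22 (X : ℝ × ℝ → ℝ × ℝ) : ℝ := (fderiv ℝ X (0, 0) (0, 1)).2

/-- Determinant of the Jacobian matrix of `X` at the origin. -/
noncomputable def detJ (X : ℝ × ℝ → ℝ × ℝ) : ℝ := jac11 X * jac22 X - jac12 X * jac21 X
/-- Trace of the Jacobian matrix of `X` at the origin. -/
noncomputable def trJ (X : ℝ × ℝ → ℝ × ℝ) : ℝ := jac11 X + jac22 X

/-- The first (complex) eigenvalue of the Jacobian matrix of `X` at the origin. -/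
noncomputable def eig1 (X : ℝ × ℝ → ℝ × ℝ) : ℂ :=
  if 0 ≤ trJ X ^ 2 - 4 * detJ X then
    (((trJ X + Real.sqrt (trJ X ^ 2 - 4 * detJ X)) / 2 : ℝ) : ℂ)
  else
    (((trJ X / 2 : ℝ) : ℂ) + (Real.sqrt (4 * detJ X - trJ X ^ 2) / 2 : ℝ) * Complex.I)

/-- The second (complex) eigenvalue of the Jacobian matrix of `X` at the origin. -/
noncomputable def eig2 (X : ℝ × ℝ → ℝ × ℝ) : ℂ :=
  if 0 ≤ trJ X ^ 2 - 4 * detJ X then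
    (((trJ X - Real.sqrt (trJ X ^ 2 - 4 * detJ X)) / 2 : ℝ) : ℂ)
  else
    (((trJ X / 2 : ℝ) : ℂ) - (Real.sqrt (4 * detJ X - trJ X ^ 2) / 2 : ℝ) * Complex.I)

/-- The quantity ℓ : `Re λ₁⁺/|Im λ₁⁺| + Re λ₁⁻/|Im λ₁⁻|` when both imaginary parts are
nonzero, and `1` otherwise. -/
noncomputable def ellVal (X Y : ℝ × ℝ → ℝ × ℝ) : ℝ :=
  if (eig1 X).im * (eig1 Y).im ≠ 0 then
    (eig1 X).re / |(eig1 X).im| + (eig1 Y).re / |(eig1 Y).im|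
  else 1

/-- Membership in Ω₀ : `Z = (X, Y)` is a piecewise `C¹` vector field on the open set `U`
containing the origin, the origin is a zero of both `X` and `Y`, it is non-degenerate for
both, and `∂ₓX₂(0,0) ⬝ ∂ₓY₂(0,0) > 0`. -/
def InOmega0 (U : Set (ℝ × ℝ)) (X Y : ℝ × ℝ → ℝ × ℝ) : Prop :=
  IsOpen U ∧ (0, 0) ∈ U ∧ ContDiffOn ℝ 1 X U ∧ ContDiffOn ℝ 1 Y U ∧
    X (0, 0) = (0, 0) ∧ Y (0, 0) = (0, 0) ∧ detJ X * detJ Y ≠ 0 ∧ jac21 X * jac21 Y > 0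

/-- Membership in Ω₁ : member of Ω₀ with distinct eigenvalues of each Jacobian matrix
and `ℓ ≠ 0`. -/
def InOmega1 (U : Set (ℝ × ℝ)) (X Y : ℝ × ℝ → ℝ × ℝ) : Prop :=
  InOmega0 U X Y ∧ eig1 X ≠ eig2 X ∧ eig1 Y ≠ eig2 Y ∧ ellVal X Y ≠ 0

/-- `γ` is a solution of `ẋ = X(x)` on the time set `I`. -/
def IsSolutionOn (X : ℝ × ℝ → ℝ × ℝ) (γ : ℝ → ℝ × ℝ) (I : Set ℝ) : Prop :=
  ∀ t ∈ I, HasDerivAt γ (X (γ t)) t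

/-- `H` maps orbit arcs of `X` lying in `S` onto orbit arcs of `X'` lying in `S'`,
preserving the direction of time (via an increasing homeomorphism of time intervals). -/
def MapsOrbits (X X' : ℝ × ℝ → ℝ × ℝ) (H : ℝ × ℝ → ℝ × ℝ) (S S' : Set (ℝ × ℝ)) : Prop :=
  ∀ (γ : ℝ → ℝ × ℝ) (I : Set ℝ), I.OrdConnected → IsSolutionOn X γ I →
    (∀ t ∈ I, γ t ∈ S) →
    ∃ (δ : ℝ → ℝ × ℝ) (J : Set ℝ) (τ : ℝ → ℝ),
      J.OrdConnected ∧ IsSolutionOn X' δ J ∧ (∀ s ∈ J, δ s ∈ S') ∧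
      Set.BijOn τ I J ∧ StrictMonoOn τ I ∧ ContinuousOn τ I ∧
      ∀ t ∈ I, H (γ t) = δ (τ t)

/-- Local Σ-equivalence near the origin between the piecewise smooth vector fields
`Z = (X, Y)` and `Z' = (X', Y')`: a homeomorphism `H` between neighborhoods of the origin
fixing the origin, preserving the switching line `{y = 0}`, and mapping orbit arcs of `X`
(resp. `Y`) in `{y ≥ 0}` (resp. `{y ≤ 0}`) onto orbit arcs of `X'` (resp. `Y'`),
preserving the direction of time, and conversely. -/
def LocalSigmaEquiv (X Y X' Y' : ℝ × ℝ → ℝ × ℝ) : Prop :=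
  ∃ (U₀ V₀ : Set (ℝ × ℝ)) (H Hinv : ℝ × ℝ → ℝ × ℝ),
    U₀ ∈ nhds ((0, 0) : ℝ × ℝ) ∧ V₀ ∈ nhds ((0, 0) : ℝ × ℝ) ∧
    ContinuousOn H U₀ ∧ ContinuousOn Hinv V₀ ∧
    Set.BijOn H U₀ V₀ ∧
    (∀ p ∈ U₀, Hinv (H p) = p) ∧ (∀ q ∈ V₀, H (Hinv q) = q) ∧
    H (0, 0) = (0, 0) ∧
    H '' (U₀ ∩ {p : ℝ × ℝ | p.2 = 0}) = V₀ ∩ {p : ℝ × ℝ | p.2 = 0} ∧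
    MapsOrbits X X' H (U₀ ∩ {p : ℝ × ℝ | 0 ≤ p.2}) (V₀ ∩ {p : ℝ × ℝ | 0 ≤ p.2}) ∧
    MapsOrbits Y Y' H (U₀ ∩ {p : ℝ × ℝ | p.2 ≤ 0}) (V₀ ∩ {p : ℝ × ℝ | p.2 ≤ 0}) ∧
    MapsOrbits X' X Hinv (V₀ ∩ {p : ℝ × ℝ | 0 ≤ p.2}) (U₀ ∩ {p : ℝ × ℝ | 0 ≤ p.2}) ∧
    MapsOrbits Y' Y Hinv (V₀ ∩ {p : ℝ × ℝ | p.2 ≤ 0}) (U₀ ∩ {p : ℝ × ℝ | p.2 ≤ 0})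

lemma hd_fst {γ : ℝ → ℝ × ℝ} {v : ℝ × ℝ} {t : ℝ} (h : HasDerivAt γ v t) :
    HasDerivAt (fun s => (γ s).1) v.1 t :=
  ((ContinuousLinearMap.fst ℝ ℝ ℝ).hasFDerivAt (x := γ t)).comp_hasDerivAt t h

lemma hd_snd {γ : ℝ → ℝ × ℝ} {v : ℝ × ℝ} {t : ℝ} (h : HasDerivAt γ v t) :
    HasDerivAt (fun s => (γ s).2) v.2 t :=
  ((ContinuousLinearMap.snd ℝ ℝ ℝ).hasFDerivAt (x := γ t)).comp_hasDerivAt t h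

lemma reparam (X Y : ℝ × ℝ → ℝ × ℝ) (C : ℝ → ℝ × ℝ) (ψ : ℝ → ℝ)
    (hψc : Continuous ψ) (hψp : Function.Periodic ψ (2 * Real.pi)) (hψ0 : ∀ θ, 0 ≤ ψ θ)
    (hψ1 : ∀ θ, Real.sin θ ≠ 0 → 0 < ψ θ)
    (hCc : Continuous C) (hCp : Function.Periodic C (2 * Real.pi))
    (hC1 : ∀ θ, 0 < (C θ).2 → 0 < Real.sin θ) (hC2 : ∀ θ, (C θ).2 < 0 → Real.sin θ < 0)
    (hC3 : ∀ θ, (C θ).2 = 0 → Real.sin θ = 0)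
    (hX : ∀ θ, 0 < Real.sin θ → HasDerivAt C (ψ θ • X (C θ)) θ)
    (hY : ∀ θ, Real.sin θ < 0 → HasDerivAt C (ψ θ • Y (C θ)) θ)
    (hcr : ∀ θ, Real.sin θ = 0 → (X (C θ)).2 * (Y (C θ)).2 > 0)
    (hnc : C 0 ≠ C Real.pi) :
    ∃ γ, IsCrossingPeriodicOrbit X Y γ ∧ Set.range γ = Set.range C := by
  have hii : ∀ a b, IntervalIntegrable ψ MeasureTheory.volume a b :=
    fun a b => hψc.intervalIntegrable a b
  set F : ℝ → ℝ := fun u => ∫ x in (0:ℝ)..u, ψ x with hF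
  have hFd : ∀ b, HasDerivAt F (ψ b) b := fun b =>
    (hψc.integral_hasStrictDerivAt 0 b).hasDerivAt
  have hFc : Continuous F := continuous_iff_continuousAt.2 fun b => (hFd b).continuousAt
  have hmono : StrictMono F := by
    intro a b hab
    have h1 : F b - F a = ∫ x in a..b, ψ x :=
      intervalIntegral.integral_interval_sub_left (hii _ _) (hii _ _)
    have h2 : 0 < ∫ x in a..b, ψ x := by
      apply intervalIntegral.integral_pos hab hψc.continuousOn (fun x _ => hψ0 x)
      by_contra hcon
      push Not at hcon
      have hs : ∀ x ∈ Set.Icc a b, Real.sin x = 0 := by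
        intro x hx
        by_contra h
        exact absurd (hψ1 x h) (not_lt.2 (hcon x hx))
      -- interior point: derivative of sin is zero
      have hm : (a + b) / 2 ∈ Set.Ioo a b := ⟨by linarith, by linarith⟩
      have he : Real.sin =ᶠ[nhds ((a + b) / 2)] fun _ => (0 : ℝ) := by
        filter_upwards [Ioo_mem_nhds hm.1 hm.2] with x hx
        exact hs x ⟨hx.1.le, hx.2.le⟩
      have hd := he.deriv_eq
      simp only [Real.deriv_sin, deriv_const] at hd
      have h0 := hs _ ⟨hm.1.le, hm.2.le⟩
      have := Real.sin_sq_add_cos_sq ((a + b) / 2)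
      rw [hd, h0] at this
      norm_num at this
    linarith
  have hT : F (2 * Real.pi) > 0 := by
    have := hmono (show (0:ℝ) < 2 * Real.pi by positivity)
    simpa [hF] using this
  have hsurj : Function.Surjective F := by
    apply hFc.surjective
    · exact hψp.tendsto_atTop_intervalIntegral_of_pos hT (by positivity)
    · exact hψp.tendsto_atBot_intervalIntegral_of_pos hT (by positivity)
  set e : ℝ ≃o ℝ := StrictMono.orderIsoOfSurjective F hmono hsurj with he
  have heF : ∀ x, e x = F x := fun x => rfl
  have hes : ∀ t, F (e.symm t) = t := fun t => by rw [← heF]; simp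
  have hse : ∀ x, e.symm (F x) = x := fun x => by rw [← heF]; simp
  have hsc : Continuous e.symm := e.symm.continuous
  have hper : ∀ x, F (x + 2 * Real.pi) = F x + F (2 * Real.pi) := by
    intro x
    have := hψp.intervalIntegral_add_eq_add 0 x hii
    simpa [hF] using this
  have hsd : ∀ t, Real.sin (e.symm t) ≠ 0 → HasDerivAt e.symm (ψ (e.symm t))⁻¹ t := by
    intro t ht
    exact HasDerivAt.of_local_left_inverse hsc.continuousAt (hFd _) (hψ1 _ ht).ne'
      (Eventually.of_forall hes)
  refine ⟨C ∘ e.symm, ⟨hCc.comp hsc, ⟨F (2 * Real.pi), hT, ?_⟩, ⟨F 0, F Real.pi, ?_⟩,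
    ?_, ?_, ?_, ?_⟩, ?_⟩
  · intro t
    have : e.symm (t + F (2 * Real.pi)) = e.symm t + 2 * Real.pi := by
      rw [← hse (e.symm t + 2 * Real.pi), hper, hes]
    simp only [Function.comp, this]
    exact hCp _
  · simpa [hse] using hnc
  · intro t ht
    have h1 := hC1 _ ht
    have := (hX _ h1).scomp t (hsd t h1.ne')
    rwa [smul_smul, inv_mul_cancel₀ (hψ1 _ h1.ne').ne', one_smul] at this
  · intro t ht
    have h1 := hC2 _ ht
    have := (hY _ h1).scomp t (hsd t h1.ne)
    rwa [smul_smul, inv_mul_cancel₀ (hψ1 _ h1.ne).ne', one_smul] at this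
  · intro t ht
    have h1 := hC3 _ ht
    -- isolated zeros of sin near e.symm t
    have hne : ∀ᶠ x in nhdsWithin (e.symm t) {e.symm t}ᶜ, Real.sin x ≠ 0 := by
      apply (Real.hasDerivAt_sin (e.symm t)).eventually_ne
      intro h0
      have := Real.sin_sq_add_cos_sq (e.symm t)
      rw [h0, h1] at this
      norm_num at this
    rw [eventually_nhdsWithin_iff] at hne
    have h2 := hsc.continuousAt.eventually hne
    rw [Metric.eventually_nhds_iff] at h2
    obtain ⟨ε, hε, h3⟩ := h2
    refine ⟨ε, hε, fun s hs hst h0 => ?_⟩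
    exact h3 (by simpa [Real.dist_eq] using hst) (by simpa using hs) (hC3 _ h0)
  · intro t ht
    exact hcr _ (hC3 _ ht)
  · exact e.symm.surjective.range_comp C

lemma right_sign {X Y : ℝ × ℝ → ℝ × ℝ} {γ : ℝ → ℝ × ℝ} (h : IsCrossingPeriodicOrbit X Y γ)
    (t : ℝ) : ∃ ε > 0, (∀ s ∈ Set.Ioo t (t + ε), 0 < (γ s).2) ∨
      (∀ s ∈ Set.Ioo t (t + ε), (γ s).2 < 0) := by
  obtain ⟨hc, -, -, -, -, hd, -⟩ := h
  have hc2 : Continuous fun s => (γ s).2 := continuous_snd.comp hc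
  have key : ∃ ε > 0, ∀ s ∈ Set.Ioo t (t + ε), (γ s).2 ≠ 0 := by
    by_cases h0 : (γ t).2 = 0
    · obtain ⟨ε, hε, h1⟩ := hd t h0
      refine ⟨ε, hε, fun s hs => h1 s hs.1.ne' ?_⟩
      rw [abs_of_pos (by linarith [hs.1])]
      linarith [hs.2]
    · have h1 := hc2.continuousAt.eventually_ne h0
      rw [Metric.eventually_nhds_iff] at h1
      obtain ⟨ε, hε, h2⟩ := h1
      refine ⟨ε, hε, fun s hs => h2 ?_⟩
      rw [Real.dist_eq, abs_of_pos (by linarith [hs.1])]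
      linarith [hs.2]
  obtain ⟨ε, hε, hne⟩ := key
  refine ⟨ε, hε, ?_⟩
  by_contra hcon
  push Not at hcon
  obtain ⟨⟨s, hs, hs0⟩, ⟨u, hu, hu0⟩⟩ := hcon
  have := (isPreconnected_Ioo (a := t) (b := t + ε)).intermediate_value hs hu
    hc2.continuousOn
  obtain ⟨w, hw, hw0⟩ := this ⟨hs0, hu0⟩
  exact hne w hw hw0

lemma cover_upper {X Y : ℝ × ℝ → ℝ × ℝ} {γ : ℝ → ℝ × ℝ} (h : IsCrossingPeriodicOrbit X Y γ)
    (x0 : ℝ) (u : ℝ → ℝ)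
    (hX : ∀ t, 0 < (γ t).2 → (X (γ t)).1 < 0) (hY : ∀ t, (γ t).2 < 0 → 0 < (Y (γ t)).1)
    (hu : ∀ t, 0 ≤ (γ t).2 → (γ t).2 = u (γ t).1)
    (hb : ∀ t, -x0 ≤ (γ t).1 ∧ (γ t).1 ≤ x0)
    (hz : ∀ t, (γ t).2 = 0 → (γ t).1 = x0 ∨ (γ t).1 = -x0) :
    ∀ xq, -x0 ≤ xq → xq ≤ x0 → (xq, u xq) ∈ Set.range γ := by
  intro xq hq1 hq2
  have h' := h
  obtain ⟨hc, ⟨T, hT, hper⟩, -, hdX, hdY, -, -⟩ := h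
  have hc1 : Continuous fun s => (γ s).1 := continuous_fst.comp hc
  have hc2 : Continuous fun s => (γ s).2 := continuous_snd.comp hc
  have hcomp : IsCompact (Set.range γ) := hper.compact_of_continuous hT.ne' hc
  have hanti : ∀ t ε, (∀ s ∈ Set.Ioo t (t + ε), 0 < (γ s).2) →
      StrictAntiOn (fun s => (γ s).1) (Set.Ico t (t + ε)) := by
    intro t ε hs
    apply strictAntiOn_of_deriv_neg (convex_Ico _ _) hc1.continuousOn
    intro s hs'
    rw [interior_Ico] at hs'
    rw [(hd_fst (hdX s (hs s hs'))).deriv]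
    exact hX s (hs s hs')
  have hmono : ∀ t ε, (∀ s ∈ Set.Ioo t (t + ε), (γ s).2 < 0) →
      StrictMonoOn (fun s => (γ s).1) (Set.Ico t (t + ε)) := by
    intro t ε hs
    apply strictMonoOn_of_deriv_pos (convex_Ico _ _) hc1.continuousOn
    intro s hs'
    rw [interior_Ico] at hs'
    rw [(hd_fst (hdY s (hs s hs'))).deriv]
    exact hY s (hs s hs')
  -- a point of the orbit with `x ≥ xq`, `y ≥ 0`
  have hne : ∃ t, 0 ≤ (γ t).2 ∧ xq ≤ (γ t).1 := by
    obtain ⟨p, ⟨t, rfl⟩, hmax⟩ := hcomp.exists_isMaxOn (Set.range_nonempty γ)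
      continuous_fst.continuousOn
    have hmax' : ∀ s, (γ s).1 ≤ (γ t).1 := fun s => hmax (Set.mem_range_self s)
    obtain ⟨ε, hε, h1 | h1⟩ := right_sign h' t
    · have hy : 0 ≤ (γ t).2 := by
        by_contra hneg
        push Not at hneg
        have := (IsLocalMax.hasDerivAt_eq_zero (f := fun s => (γ s).1)
          (Filter.Eventually.of_forall hmax') (hd_fst (hdY t hneg)))
        exact (hY t hneg).ne' this
      refine ⟨t, hy, ?_⟩
      rcases hy.lt_or_eq with hy | hy
      · have := (IsLocalMax.hasDerivAt_eq_zero (f := fun s => (γ s).1)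
          (Filter.Eventually.of_forall hmax') (hd_fst (hdX t hy)))
        exact absurd this (hX t hy).ne
      · rcases hz t hy.symm with h2 | h2
        · rw [h2]; exact hq2
        · have := hanti t ε h1 (show t ∈ _ from ⟨le_rfl, by linarith⟩)
            (show t + ε / 2 ∈ _ from ⟨by linarith, by linarith⟩) (by linarith)
          have h3 := (hb (t + ε / 2)).1
          simp only at this
          linarith
    · have := hmono t ε h1 (show t ∈ _ from ⟨le_rfl, by linarith⟩)
            (show t + ε / 2 ∈ _ from ⟨by linarith, by linarith⟩) (by linarith)
      exact absurd (hmax' (t + ε / 2)) (not_le.2 this)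
  obtain ⟨t0, ht0, ht0'⟩ := hne
  have hK : IsCompact (Set.range γ ∩ {p : ℝ × ℝ | 0 ≤ p.2 ∧ xq ≤ p.1}) := by
    apply hcomp.inter_right
    exact (isClosed_le continuous_const continuous_snd).inter
      (isClosed_le continuous_const continuous_fst)
  obtain ⟨p, ⟨⟨t, rfl⟩, hy, hxq⟩, hmin⟩ := hK.exists_isMinOn
    ⟨γ t0, Set.mem_range_self t0, ht0, ht0'⟩ continuous_fst.continuousOn
  have hmin' : ∀ s, 0 ≤ (γ s).2 → xq ≤ (γ s).1 → (γ t).1 ≤ (γ s).1 :=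
    fun s h1 h2 => hmin ⟨Set.mem_range_self s, h1, h2⟩
  have hfin : (γ t).1 = xq → (xq, u xq) ∈ Set.range γ := by
    intro hx
    refine ⟨t, Prod.ext hx ?_⟩
    rw [hu t hy, hx]
  apply hfin
  obtain ⟨ε, hε, h1 | h1⟩ := right_sign h' t
  · by_contra hne
    have hlt : xq < (γ t).1 := lt_of_le_of_ne hxq (Ne.symm hne)
    have h2 := hc1.continuousAt.eventually (lt_mem_nhds hlt)
    rw [Metric.eventually_nhds_iff] at h2
    obtain ⟨ε', hε', h3⟩ := h2
    set d := min ε ε' / 2 with hd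
    have hdpos : 0 < d := by positivity
    have hd1 : d < ε := by
      have := min_le_left ε ε'
      linarith [lt_min hε hε']
    have hd2 : d < ε' := by
      have := min_le_right ε ε'
      linarith [lt_min hε hε']
    have h4 : xq < (γ (t + d)).1 := h3 (by
      rw [Real.dist_eq, add_sub_cancel_left, abs_of_pos hdpos]; exact hd2)
    have h5 := hanti t ε h1 (show t ∈ _ from ⟨le_rfl, by linarith⟩)
            (show t + d ∈ _ from ⟨by linarith, by linarith⟩) (by linarith)
    have h6 := hmin' (t + d) (h1 _ ⟨by linarith, by linarith⟩).le h4.le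
    simp only at h5
    linarith
  · have h2 := hmono t ε h1 (show t ∈ _ from ⟨le_rfl, by linarith⟩)
            (show t + ε / 2 ∈ _ from ⟨by linarith, by linarith⟩) (by linarith)
    have h3 := (hb (t + ε / 2)).2
    simp only at h2
    have hy0 : (γ t).2 = 0 := by
      apply le_antisymm _ hy
      have hcl : t ∈ closure (Set.Ioo t (t + ε)) := by
        rw [closure_Ioo (by linarith)]
        exact ⟨le_rfl, by linarith⟩
      exact closure_minimal (fun s hs => (h1 s hs).le)
        (isClosed_le hc2 continuous_const) hcl
    rcases hz t hy0 with h4 | h4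
    · linarith
    · linarith

/-- The local model vector field. -/
def md (ν κ η x0 : ℝ) (P : ℝ × ℝ → ℝ) (p : ℝ × ℝ) : ℝ × ℝ :=
  ((1 + ν * p.1) * P p,
    η * ((1 + ν * p.1) * p.2 - κ * (x0 ^ 2 - p.1 ^ 2)) - (ν * p.2 + 2 * κ * p.1) * P p)

/-- The normalised defining function of the cycle. -/
def Wn (ν κ x0 : ℝ) (p : ℝ × ℝ) : ℝ := (1 + ν * p.1) * p.2 / κ - (x0 ^ 2 - p.1 ^ 2)

/-- The graph function of the half-cycle. -/
def ug (ν κ x0 : ℝ) (x : ℝ) : ℝ := κ * (x0 ^ 2 - x ^ 2) / (1 + ν * x)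

/-- The half-cycle. -/
def arcC (ν κ x0 : ℝ) (θ : ℝ) : ℝ × ℝ := (x0 * Real.cos θ, ug ν κ x0 (x0 * Real.cos θ))

/-- Smallness hypotheses on the model. -/
structure Side (ν κ η x0 ρ : ℝ) (P : ℝ × ℝ → ℝ) : Prop where
  hκ : 0 < κ
  hη : 0 < η
  hx0 : 0 < x0
  hρ : x0 < ρ
  hκρ : 2 * κ * x0 ^ 2 < ρ
  hν : ∀ x, |x| < ρ → 1 / 2 ≤ 1 + ν * x
  hPc : Continuous P
  hP : ∀ p ∈ Metric.ball (0 : ℝ × ℝ) ρ, P p < 0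

lemma mem_ball_prod {p : ℝ × ℝ} {ρ : ℝ} :
    p ∈ Metric.ball (0 : ℝ × ℝ) ρ ↔ |p.1| < ρ ∧ |p.2| < ρ := by
  rw [mem_ball_zero_iff, Prod.norm_def, max_lt_iff, Real.norm_eq_abs, Real.norm_eq_abs]

lemma abs_x0cos {x0 : ℝ} (h : 0 < x0) (θ : ℝ) : |x0 * Real.cos θ| ≤ x0 := by
  rw [abs_mul, abs_of_pos h]
  exact mul_le_of_le_one_right h.le (Real.abs_cos_le_one θ)

namespace Side

variable {ν κ η x0 ρ : ℝ} {P : ℝ × ℝ → ℝ}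

lemma hD (h : Side ν κ η x0 ρ P) (θ : ℝ) : 1 / 2 ≤ 1 + ν * (x0 * Real.cos θ) :=
  h.hν _ ((abs_x0cos h.hx0 θ).trans_lt h.hρ)

lemma sq_eq (θ : ℝ) : x0 ^ 2 - (x0 * Real.cos θ) ^ 2 = x0 ^ 2 * Real.sin θ ^ 2 := by
  have := Real.sin_sq_add_cos_sq θ
  linear_combination (-x0 ^ 2) * this

lemma ug_nonneg (h : Side ν κ η x0 ρ P) (θ : ℝ) : 0 ≤ ug ν κ x0 (x0 * Real.cos θ) := by
  unfold ug
  rw [sq_eq]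
  have := h.hD θ
  have := h.hκ
  exact div_nonneg (by positivity) (by linarith)

lemma ug_pos (h : Side ν κ η x0 ρ P) {θ : ℝ} (hs : Real.sin θ ≠ 0) :
    0 < ug ν κ x0 (x0 * Real.cos θ) := by
  unfold ug
  rw [sq_eq]
  have := h.hD θ
  have := h.hκ
  have := h.hx0
  exact div_pos (by positivity) (by linarith)

lemma ug_zero {θ : ℝ} (hs : Real.sin θ = 0) :
    ug ν κ x0 (x0 * Real.cos θ) = 0 := by
  unfold ug
  rw [sq_eq, hs]
  simp

lemma arc_mem (h : Side ν κ η x0 ρ P) (θ : ℝ) : arcC ν κ x0 θ ∈ Metric.ball (0 : ℝ × ℝ) ρ := by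
  rw [mem_ball_prod]
  refine ⟨(abs_x0cos h.hx0 θ).trans_lt h.hρ, ?_⟩
  have h0 := h.ug_nonneg θ
  show |ug ν κ x0 (x0 * Real.cos θ)| < ρ
  rw [abs_of_nonneg h0]
  refine lt_of_le_of_lt ?_ h.hκρ
  unfold ug
  rw [sq_eq]
  have h1 := h.hD θ
  have h2 := h.hκ
  rw [div_le_iff₀ (by linarith)]
  have h3 := Real.sin_sq_le_one θ
  have h4 : κ * (x0 ^ 2 * Real.sin θ ^ 2) ≤ κ * x0 ^ 2 := by
    rw [← mul_assoc]
    exact mul_le_of_le_one_right (by positivity) h3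
  have h5 : 0 ≤ κ * x0 ^ 2 := by positivity
  nlinarith

lemma arc_cont (h : Side ν κ η x0 ρ P) : Continuous (arcC ν κ x0) := by
  unfold arcC ug
  refine Continuous.prodMk (by fun_prop) (Continuous.div (by fun_prop) (by fun_prop) ?_)
  intro θ
  have := h.hD θ
  linarith

lemma DP_pos (h : Side ν κ η x0 ρ P) (θ : ℝ) :
    0 < -((1 + ν * (x0 * Real.cos θ)) * P (arcC ν κ x0 θ)) := by
  have h1 := h.hD θ
  have h2 := h.hP _ (h.arc_mem θ)
  have := mul_neg_of_pos_of_neg (show 0 < 1 + ν * (x0 * Real.cos θ) by linarith) h2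
  linarith

lemma arc_deriv (h : Side ν κ η x0 ρ P) (θ : ℝ) :
    HasDerivAt (arcC ν κ x0)
      ((Real.sin θ * (x0 / -((1 + ν * (x0 * Real.cos θ)) * P (arcC ν κ x0 θ)))) •
        md ν κ η x0 P (arcC ν κ x0 θ)) θ := by
  have h1 := h.hD θ
  have h2 := h.hP _ (h.arc_mem θ)
  have hc : HasDerivAt (fun θ => x0 * Real.cos θ) (x0 * -Real.sin θ) θ :=
    (Real.hasDerivAt_cos θ).const_mul x0
  have hn : HasDerivAt (fun θ => κ * (x0 ^ 2 - (x0 * Real.cos θ) ^ 2))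
      (κ * (0 - 2 * (x0 * Real.cos θ) * (x0 * -Real.sin θ))) θ := by
    have := ((hasDerivAt_const θ (x0 ^ 2)).sub (hc.pow 2)).const_mul κ
    refine this.congr_deriv ?_
    norm_num
  have hd : HasDerivAt (fun θ => 1 + ν * (x0 * Real.cos θ)) (ν * (x0 * -Real.sin θ)) θ :=
    (hc.const_mul ν).const_add 1
  have hq := hn.div hd (by linarith)
  have hp := hc.prodMk hq
  refine HasDerivAt.congr_deriv (f := arcC ν κ x0) hp ?_
  have hPne : P (arcC ν κ x0 θ) ≠ 0 := h2.ne
  have hDne : 1 + ν * (x0 * Real.cos θ) ≠ 0 := by linarith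
  generalize hPP : P (arcC ν κ x0 θ) = PP at *
  unfold md
  rw [hPP]
  unfold arcC ug
  simp only
  generalize 1 + ν * (x0 * Real.cos θ) = D at *
  ext
  · simp only [Prod.smul_mk, smul_eq_mul]
    field_simp
  · simp only [Prod.smul_mk, smul_eq_mul]
    field_simp
    ring

lemma Wn_deriv (h : Side ν κ η x0 ρ P) {γ : ℝ → ℝ × ℝ} {t : ℝ}
    (hg : HasDerivAt γ (md ν κ η x0 P (γ t)) t) :
    HasDerivAt (fun s => Wn ν κ x0 (γ s)) ((1 + ν * (γ t).1) * η * Wn ν κ x0 (γ t)) t := by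
  have h1 := hd_fst hg
  have h2 := hd_snd hg
  have h3 := ((((h1.const_mul ν).const_add 1).mul h2).div_const κ).sub
    ((hasDerivAt_const t (x0 ^ 2)).sub (h1.pow 2))
  refine HasDerivAt.congr_deriv (f := fun s => Wn ν κ x0 (γ s)) h3 ?_
  have := h.hκ.ne'
  unfold Wn md
  simp only
  push_cast
  field_simp
  ring

lemma Wsq_deriv (h : Side ν κ η x0 ρ P) {γ : ℝ → ℝ × ℝ} {t : ℝ}
    (hg : HasDerivAt γ (md ν κ η x0 P (γ t)) t) (hm : γ t ∈ Metric.ball (0 : ℝ × ℝ) ρ)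
    (hne : Wn ν κ x0 (γ t) ≠ 0) :
    ∃ d > 0, HasDerivAt (fun s => Wn ν κ x0 (γ s) ^ 2) d t := by
  refine ⟨_, ?_, (h.Wn_deriv hg).pow 2⟩
  have h1 := h.hν _ (mem_ball_prod.1 hm).1
  have h2 := h.hη
  have h3 : 0 < 1 + ν * (γ t).1 := by linarith
  have : 0 < 2 * ((1 + ν * (γ t).1) * η) * Wn ν κ x0 (γ t) ^ 2 := by positivity
  norm_num
  linarith

/-- On the zero level. -/
lemma zero_level (h : Side ν κ η x0 ρ P) {p : ℝ × ℝ} (hm : p ∈ Metric.ball (0 : ℝ × ℝ) ρ)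
    (hy : 0 ≤ p.2) (hW : Wn ν κ x0 p = 0) :
    p.2 = ug ν κ x0 p.1 ∧ (-x0 ≤ p.1 ∧ p.1 ≤ x0) ∧ (p.2 = 0 → p.1 = x0 ∨ p.1 = -x0) := by
  have h1 := h.hν _ (mem_ball_prod.1 hm).1
  have h2 := h.hκ
  have h3 : 0 < 1 + ν * p.1 := by linarith
  have h4 := h.hx0
  unfold Wn at hW
  have h5 : 0 ≤ (1 + ν * p.1) * p.2 / κ := by positivity
  refine ⟨?_, abs_le.1 (abs_le_of_sq_le_sq (by linarith) h4.le), ?_⟩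
  · unfold ug
    rw [← sub_eq_zero.1 hW]
    field_simp
  · intro h0
    rw [h0] at hW
    apply sq_eq_sq_iff_eq_or_eq_neg.1
    simp at hW
    linarith

end Side

lemma IsCrossingPeriodicOrbit.rot {X Y : ℝ × ℝ → ℝ × ℝ} {γ : ℝ → ℝ × ℝ}
    (h : IsCrossingPeriodicOrbit X Y γ) :
    IsCrossingPeriodicOrbit (fun p => -Y (-p)) (fun p => -X (-p)) (fun t => -γ t) := by
  obtain ⟨hc, ⟨T, hT, hper⟩, ⟨t, s, hts⟩, hdX, hdY, hd, hcr⟩ := h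
  refine ⟨hc.neg, ⟨T, hT, fun t => by simp only [hper t]⟩, ⟨t, s, by simpa using hts⟩, ?_, ?_, ?_, ?_⟩
  · intro t ht
    simp only [neg_neg]
    exact (hdY t (by simpa using ht)).neg
  · intro t ht
    simp only [neg_neg]
    exact (hdX t (by simpa using ht)).neg
  · intro t ht
    obtain ⟨ε, hε, h1⟩ := hd t (by simpa using ht)
    exact ⟨ε, hε, fun s a b => by simpa using h1 s a b⟩
  · intro t ht
    have := hcr t (by simpa using ht)
    simp only [neg_neg, Prod.snd_neg]
    linarith

lemma iso_zero {X Y : ℝ × ℝ → ℝ × ℝ} {x0 ρ η ν κ ν' κ' : ℝ} {P P' : ℝ × ℝ → ℝ}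
    (h1 : Side ν κ η x0 ρ P) (h2 : Side ν' κ' η x0 ρ P')
    (hX : ∀ p ∈ Metric.ball (0 : ℝ × ℝ) ρ, X p = md ν κ η x0 P p)
    (hY : ∀ p ∈ Metric.ball (0 : ℝ × ℝ) ρ, Y p = -md ν' κ' η x0 P' (-p))
    {γ : ℝ → ℝ × ℝ} (h : IsCrossingPeriodicOrbit X Y γ)
    (hr : Set.range γ ⊆ Metric.ball (0 : ℝ × ℝ) ρ) (t : ℝ) :
    (0 ≤ (γ t).2 → Wn ν κ x0 (γ t) = 0) ∧ ((γ t).2 ≤ 0 → Wn ν' κ' x0 (-γ t) = 0) := by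
  have h' := h
  obtain ⟨hc, ⟨T, hT, hper⟩, -, hdX, hdY, -, -⟩ := h
  have hm : ∀ t, γ t ∈ Metric.ball (0 : ℝ × ℝ) ρ := fun t => hr (Set.mem_range_self t)
  set f : ℝ × ℝ → ℝ := fun p => if 0 ≤ p.2 then Wn ν κ x0 p ^ 2 else Wn ν' κ' x0 (-p) ^ 2 with hf
  have hfc : Continuous f := by
    apply Continuous.if_le
    · unfold Wn; fun_prop
    · unfold Wn; fun_prop
    · exact continuous_const
    · exact continuous_snd
    · intro p hp
      simp [Wn, ← hp]
  have hcomp : IsCompact (Set.range γ) := hper.compact_of_continuous hT.ne' hc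
  obtain ⟨p, ⟨tm, rfl⟩, hmax⟩ := hcomp.exists_isMaxOn (Set.range_nonempty γ) hfc.continuousOn
  have hmax' : ∀ s, f (γ s) ≤ f (γ tm) := fun s => hmax (Set.mem_range_self s)
  have hle : f (γ tm) ≤ 0 := by
    by_contra hpos
    push Not at hpos
    have hfg : Continuous fun s => f (γ s) := hfc.comp hc
    have h3 := hfg.continuousAt.eventually (lt_mem_nhds hpos)
    rw [Metric.eventually_nhds_iff] at h3
    obtain ⟨ε', hε', h3⟩ := h3
    obtain ⟨ε, hε, hs⟩ := right_sign h' tm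
    set d := min ε ε' with hd
    have hdpos : 0 < d := lt_min hε hε'
    have hd1 : d ≤ ε := min_le_left _ _
    have hd2 : d ≤ ε' := min_le_right _ _
    have hder : ∀ s ∈ Set.Ioo tm (tm + d), 0 < deriv (fun s => f (γ s)) s := by
      intro s hsm
      have hfs : 0 < f (γ s) := h3 (by
        rw [Real.dist_eq, abs_of_pos (by linarith [hsm.1])]
        linarith [hsm.2])
      have hs' : s ∈ Set.Ioo tm (tm + ε) := ⟨hsm.1, by linarith [hsm.2]⟩
      rcases hs with hs | hs
      · have hy := hs s hs'
        have e : (fun s => f (γ s)) =ᶠ[nhds s] fun s => Wn ν κ x0 (γ s) ^ 2 := by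
          filter_upwards [Ioo_mem_nhds hs'.1 hs'.2] with w hw
          simp [hf, (hs w hw).le]
        rw [e.deriv_eq]
        have hfs' := hfs
        rw [show f (γ s) = _ from e.self_of_nhds] at hfs'
        obtain ⟨d', hd', hdd⟩ := h1.Wsq_deriv (γ := γ) (t := s)
          (by rw [← hX _ (hm s)]; exact hdX s hy) (hm s)
          (fun h0 => by simp [h0] at hfs')
        rw [hdd.deriv]
        exact hd'
      · have hy := hs s hs'
        have e : (fun s => f (γ s)) =ᶠ[nhds s] fun s => Wn ν' κ' x0 (-γ s) ^ 2 := by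
          filter_upwards [Ioo_mem_nhds hs'.1 hs'.2] with w hw
          simp [hf, (hs w hw)]
        rw [e.deriv_eq]
        have hfs' := hfs
        rw [show f (γ s) = _ from e.self_of_nhds] at hfs'
        obtain ⟨d', hd', hdd⟩ := h2.Wsq_deriv (γ := fun s => -γ s) (t := s)
          (by
            have := (hdY s hy).neg
            rw [hY _ (hm s), neg_neg] at this
            exact this) (by simpa using hm s)
          (fun h0 => by simp [h0] at hfs')
        rw [hdd.deriv]
        exact hd'
    have hmono := strictMonoOn_of_deriv_pos (convex_Icc tm (tm + d)) hfg.continuousOn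
      (by rw [interior_Icc]; exact hder)
    have := hmono (show tm ∈ _ from ⟨le_rfl, by linarith⟩)
      (show tm + d ∈ _ from ⟨by linarith, le_rfl⟩) (by linarith)
    exact absurd (hmax' (tm + d)) (not_le.2 this)
  have hft : f (γ t) ≤ 0 := (hmax' t).trans hle
  constructor
  · intro hy
    simp only [hf, hy, if_true] at hft
    exact pow_eq_zero_iff (two_ne_zero) |>.1 (le_antisymm hft (sq_nonneg _))
  · intro hy
    rcases hy.lt_or_eq with hy | hy
    · simp only [hf, not_le.2 hy, if_false] at hft
      exact pow_eq_zero_iff (two_ne_zero) |>.1 (le_antisymm hft (sq_nonneg _))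
    · simp only [hf, hy, le_refl, if_true] at hft
      have := pow_eq_zero_iff (two_ne_zero) |>.1 (le_antisymm hft (sq_nonneg _))
      simpa [Wn, hy] using this

/-- The full cycle. -/
def cyc (ν κ ν' κ' x0 : ℝ) (θ : ℝ) : ℝ × ℝ :=
  if 0 ≤ Real.sin θ then arcC ν κ x0 θ else -arcC ν' κ' x0 (θ + Real.pi)

lemma iso_range {X Y : ℝ × ℝ → ℝ × ℝ} {x0 ρ η ν κ ν' κ' : ℝ} {P P' : ℝ × ℝ → ℝ}
    (h1 : Side ν κ η x0 ρ P) (h2 : Side ν' κ' η x0 ρ P')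
    (hX : ∀ p ∈ Metric.ball (0 : ℝ × ℝ) ρ, X p = md ν κ η x0 P p)
    (hY : ∀ p ∈ Metric.ball (0 : ℝ × ℝ) ρ, Y p = -md ν' κ' η x0 P' (-p))
    {γ : ℝ → ℝ × ℝ} (h : IsCrossingPeriodicOrbit X Y γ)
    (hr : Set.range γ ⊆ Metric.ball (0 : ℝ × ℝ) ρ) :
    Set.range γ = Set.range (cyc ν κ ν' κ' x0) := by
  have hz := iso_zero h1 h2 hX hY h hr
  have hm : ∀ t, γ t ∈ Metric.ball (0 : ℝ × ℝ) ρ := fun t => hr (Set.mem_range_self t)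
  have hmn : ∀ t, -γ t ∈ Metric.ball (0 : ℝ × ℝ) ρ := fun t => by simpa using hm t
  have up := fun t (hy : 0 ≤ (γ t).2) => h1.zero_level (hm t) hy ((hz t).1 hy)
  have lo := fun t (hy : (γ t).2 ≤ 0) => h2.zero_level (p := -γ t) (hmn t)
    (by simpa using hy) ((hz t).2 hy)
  have hx0 := h1.hx0
  have hb : ∀ t, -x0 ≤ (γ t).1 ∧ (γ t).1 ≤ x0 := by
    intro t
    rcases le_total 0 (γ t).2 with hy | hy
    · exact (up t hy).2.1
    · have := (lo t hy).2.1
      simp only [Prod.fst_neg] at this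
      constructor <;> linarith [this.1, this.2]
  have hz0 : ∀ t, (γ t).2 = 0 → (γ t).1 = x0 ∨ (γ t).1 = -x0 := fun t h0 =>
    (up t h0.ge).2.2 h0
  have hXs : ∀ t, (X (γ t)).1 < 0 := by
    intro t
    rw [hX _ (hm t)]
    have := h1.hν _ (mem_ball_prod.1 (hm t)).1
    exact mul_neg_of_pos_of_neg (by linarith) (h1.hP _ (hm t))
  have hYs : ∀ t, 0 < (Y (γ t)).1 := by
    intro t
    rw [hY _ (hm t)]
    have := h2.hν _ (mem_ball_prod.1 (hmn t)).1
    have := mul_neg_of_pos_of_neg (show 0 < 1 + ν' * (-γ t).1 by linarith) (h2.hP _ (hmn t))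
    simp only [md, Prod.fst_neg] at this ⊢
    linarith
  have cu := cover_upper h x0 (ug ν κ x0) (fun t _ => hXs t) (fun t _ => hYs t)
    (fun t hy => (up t hy).1) hb hz0
  have cl := cover_upper h.rot x0 (ug ν' κ' x0) (fun t _ => by simpa using hYs t)
    (fun t _ => by simpa using hXs t)
    (fun t hy => (lo t (by simpa using hy)).1)
    (fun t => by
      have := hb t
      simp only [Prod.fst_neg]
      constructor <;> linarith [this.1, this.2])
    (fun t h0 => by
      have := hz0 t (by simpa using h0)
      simp only [Prod.fst_neg]
      rcases this with h | h
      · right; rw [h]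
      · left; rw [h]; simp)
  apply Set.Subset.antisymm
  · rintro _ ⟨t, rfl⟩
    rcases le_or_gt 0 (γ t).2 with hy | hy
    · obtain ⟨e1, ⟨e2, e3⟩, -⟩ := up t hy
      refine ⟨Real.arccos ((γ t).1 / x0), ?_⟩
      have hs : 0 ≤ Real.sin (Real.arccos ((γ t).1 / x0)) :=
        Real.sin_nonneg_of_nonneg_of_le_pi (Real.arccos_nonneg _) (Real.arccos_le_pi _)
      rw [cyc, if_pos hs, arcC, Real.cos_arccos (by rw [le_div_iff₀ hx0]; linarith)
        (by rw [div_le_iff₀ hx0]; linarith)]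
      have : x0 * ((γ t).1 / x0) = (γ t).1 := by field_simp
      rw [this, ← e1]
    · obtain ⟨e1, ⟨e2, e3⟩, -⟩ := lo t hy.le
      refine ⟨Real.arccos ((-γ t).1 / x0) + Real.pi, ?_⟩
      have hc : Real.cos (Real.arccos ((-γ t).1 / x0)) = (-γ t).1 / x0 :=
        Real.cos_arccos (by rw [le_div_iff₀ hx0]; linarith)
        (by rw [div_le_iff₀ hx0]; linarith)
      have hs : 0 ≤ Real.sin (Real.arccos ((-γ t).1 / x0)) :=
        Real.sin_nonneg_of_nonneg_of_le_pi (Real.arccos_nonneg _) (Real.arccos_le_pi _)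
      have hxx : x0 * ((-γ t).1 / x0) = (-γ t).1 := by field_simp
      have hs0 : Real.sin (Real.arccos ((-γ t).1 / x0)) ≠ 0 := by
        intro h0
        have := Side.ug_zero (ν := ν') (κ := κ') (x0 := x0) h0
        rw [hc, hxx, ← e1] at this
        simp at this
        linarith
      have hs' := lt_of_le_of_ne hs (Ne.symm hs0)
      rw [cyc, if_neg (by rw [Real.sin_add_pi]; linarith), arcC, add_assoc, ← two_mul,
        Real.cos_add_two_pi, hc, hxx, ← e1]
      simp
  · rintro _ ⟨θ, rfl⟩
    unfold cyc
    split_ifs with hs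
    · have := abs_le.1 (abs_x0cos hx0 θ)
      exact cu _ this.1 this.2
    · have := abs_le.1 (abs_x0cos hx0 (θ + Real.pi))
      obtain ⟨t, ht⟩ := cl _ this.1 this.2
      refine ⟨t, ?_⟩
      rw [arcC, ← ht]
      simp

lemma dynamics {X Y : ℝ × ℝ → ℝ × ℝ} {x0 ρ η ν κ ν' κ' : ℝ} {P P' : ℝ × ℝ → ℝ}
    (h1 : Side ν κ η x0 ρ P) (h2 : Side ν' κ' η x0 ρ P')
    (hX : ∀ p ∈ Metric.ball (0 : ℝ × ℝ) ρ, X p = md ν κ η x0 P p)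
    (hY : ∀ p ∈ Metric.ball (0 : ℝ × ℝ) ρ, Y p = -md ν' κ' η x0 P' (-p)) :
    ∃ γ, IsCrossingPeriodicOrbit X Y γ ∧ Set.range γ ⊆ Metric.ball (0 : ℝ × ℝ) ρ ∧
      ∀ γ', IsCrossingPeriodicOrbit X Y γ' → Set.range γ' ⊆ Metric.ball (0 : ℝ × ℝ) ρ →
        Set.range γ' = Set.range γ := by
  have hx0 := h1.hx0
  set C := cyc ν κ ν' κ' x0 with hCdef
  set g1 : ℝ → ℝ := fun θ => x0 / -((1 + ν * (x0 * Real.cos θ)) * P (arcC ν κ x0 θ)) with hg1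
  set g2 : ℝ → ℝ := fun θ => x0 / -((1 + ν' * (x0 * Real.cos θ)) * P' (arcC ν' κ' x0 θ)) with hg2
  have hg1p : ∀ θ, 0 < g1 θ := fun θ => div_pos hx0 (h1.DP_pos θ)
  have hg2p : ∀ θ, 0 < g2 θ := fun θ => div_pos hx0 (h2.DP_pos θ)
  have hg1c : Continuous g1 := by
    have := h1.hPc.comp h1.arc_cont
    refine Continuous.div continuous_const ?_ (fun θ => (h1.DP_pos θ).ne')
    exact (Continuous.mul (by fun_prop) this).neg
  have hg2c : Continuous g2 := by
    have := h2.hPc.comp h2.arc_cont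
    refine Continuous.div continuous_const ?_ (fun θ => (h2.DP_pos θ).ne')
    exact (Continuous.mul (by fun_prop) this).neg
  have hg1per : Function.Periodic g1 (2 * Real.pi) := fun θ => by simp [hg1, arcC]
  have hg2per : Function.Periodic g2 (2 * Real.pi) := fun θ => by simp [hg2, arcC]
  set ψ : ℝ → ℝ := fun θ => max (Real.sin θ) 0 * g1 θ + max (-Real.sin θ) 0 * g2 (θ + Real.pi)
    with hψ
  have hCup : ∀ θ, 0 ≤ Real.sin θ → C θ = arcC ν κ x0 θ := fun θ h => if_pos h
  have hClo : ∀ θ, Real.sin θ < 0 → C θ = -arcC ν' κ' x0 (θ + Real.pi) :=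
    fun θ h => if_neg (not_le.2 h)
  have hCm : ∀ θ, C θ ∈ Metric.ball (0 : ℝ × ℝ) ρ := by
    intro θ
    rcases le_or_gt 0 (Real.sin θ) with h | h
    · rw [hCup θ h]; exact h1.arc_mem θ
    · rw [hClo θ h]; simpa using h2.arc_mem (θ + Real.pi)
  have hsg0 : ∀ θ, Real.sin θ = 0 → (C θ).2 = 0 := by
    intro θ hs
    rw [hCup θ hs.ge]
    exact Side.ug_zero hs
  have hsgp : ∀ θ, 0 < Real.sin θ → 0 < (C θ).2 := by
    intro θ hs
    rw [hCup θ hs.le]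
    exact h1.ug_pos hs.ne'
  have hsgn : ∀ θ, Real.sin θ < 0 → (C θ).2 < 0 := by
    intro θ hs
    rw [hClo θ hs]
    have := h2.ug_pos (θ := θ + Real.pi) (by rw [Real.sin_add_pi]; linarith)
    simpa [arcC] using this
  have key := reparam X Y C ψ ?_ ?_ ?_ ?_ ?_ ?_ ?_ ?_ ?_ ?_ ?_ ?_ ?_
  · obtain ⟨γ, hγ, hrg⟩ := key
    refine ⟨γ, hγ, ?_, ?_⟩
    · rw [hrg]; rintro _ ⟨θ, rfl⟩; exact hCm θ
    · intro γ' h' hr'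
      rw [hrg]
      exact iso_range h1 h2 hX hY h' hr'
  · fun_prop
  · intro θ
    have e : θ + 2 * Real.pi + Real.pi = (θ + Real.pi) + 2 * Real.pi := by ring
    simp only [hψ, Real.sin_add_two_pi, hg1per θ, e, hg2per (θ + Real.pi)]
  · intro θ
    have := (hg1p θ).le
    have := (hg2p (θ + Real.pi)).le
    positivity
  · intro θ hs
    have a := hg1p θ
    have b := hg2p (θ + Real.pi)
    rcases lt_or_gt_of_ne hs with h | h
    · have : max (-Real.sin θ) 0 = -Real.sin θ := max_eq_left (by linarith)
      have h' : 0 < -Real.sin θ := by linarith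
      simp only [hψ, this]
      positivity
    · have : max (Real.sin θ) 0 = Real.sin θ := max_eq_left (by linarith)
      simp only [hψ, this]
      positivity
  · apply Continuous.if_le h1.arc_cont
    · exact (h2.arc_cont.comp (by fun_prop)).neg
    · exact continuous_const
    · exact Real.continuous_sin
    · intro θ h0
      have e1 := Side.ug_zero (ν := ν) (κ := κ) (x0 := x0) h0.symm
      have e2 := Side.ug_zero (ν := ν') (κ := κ') (x0 := x0) (θ := θ + Real.pi)
        (by rw [Real.sin_add_pi, ← h0]; simp)
      unfold arcC
      rw [e1, e2]
      simp
  · intro θ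
    have e : θ + 2 * Real.pi + Real.pi = (θ + Real.pi) + 2 * Real.pi := by ring
    simp only [hCdef, cyc, Real.sin_add_two_pi, e, arcC, Real.cos_add_two_pi]
  · intro θ h
    by_contra hs
    rcases (not_lt.1 hs).lt_or_eq with hs | hs
    · linarith [hsgn θ hs]
    · linarith [hsg0 θ hs]
  · intro θ h
    by_contra hs
    rcases (not_lt.1 hs).lt_or_eq with hs | hs
    · linarith [hsgp θ hs]
    · linarith [hsg0 θ hs.symm]
  · intro θ h
    by_contra hs
    rcases lt_or_gt_of_ne hs with hs | hs
    · linarith [hsgn θ hs]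
    · linarith [hsgp θ hs]
  · intro θ hs
    have e : C =ᶠ[nhds θ] arcC ν κ x0 := by
      filter_upwards [Real.continuous_sin.continuousAt.eventually (lt_mem_nhds hs)] with w hw
      exact hCup w hw.le
    rw [e.hasDerivAt_iff, hX _ (hCm θ), hCup θ hs.le]
    have hp : ψ θ = Real.sin θ * g1 θ := by
      simp only [hψ, max_eq_left hs.le, max_eq_right (show -Real.sin θ ≤ 0 by linarith)]
      ring
    rw [hp]
    exact h1.arc_deriv θ
  · intro θ hs
    have e : C =ᶠ[nhds θ] fun w => -arcC ν' κ' x0 (w + Real.pi) := by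
      filter_upwards [Real.continuous_sin.continuousAt.eventually (gt_mem_nhds hs)] with w hw
      exact hClo w hw
    rw [e.hasDerivAt_iff, hY _ (hCm θ), hClo θ hs, neg_neg]
    have hp : ψ θ = Real.sin (θ + Real.pi) * g2 (θ + Real.pi) := by
      simp only [hψ, max_eq_right hs.le, max_eq_left (show 0 ≤ -Real.sin θ by linarith),
        Real.sin_add_pi]
      ring
    rw [hp, smul_neg]
    exact ((h2.arc_deriv (θ + Real.pi)).comp_add_const θ Real.pi).neg
  · intro θ hs
    have hx : (C θ).1 ^ 2 = x0 ^ 2 := by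
      rw [hCup θ hs.ge]
      have := Real.sin_sq_add_cos_sq θ
      rw [hs] at this
      show (x0 * Real.cos θ) ^ 2 = x0 ^ 2
      linear_combination x0 ^ 2 * this
    have hy := hsg0 θ hs
    rw [hX _ (hCm θ), hY _ (hCm θ)]
    have p1 := h1.hP _ (hCm θ)
    have p2 := h2.hP (-C θ) (by simpa using hCm θ)
    have k1 := h1.hκ
    have k2 := h2.hκ
    have hval : (md ν κ η x0 P (C θ)).2 * (-md ν' κ' η x0 P' (-C θ)).2
        = 4 * (κ * κ') * (x0 ^ 2) * (P (C θ) * P' (-C θ)) := by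
      simp only [md, Prod.snd_neg, Prod.fst_neg, hy]
      have e2 : (-(C θ).1) ^ 2 = x0 ^ 2 := by rw [neg_sq]; exact hx
      rw [e2, hx]
      linear_combination (4 * (κ * κ') * (P (C θ) * P' (-C θ))) * hx
    rw [hval]
    have := mul_pos_of_neg_of_neg p1 p2
    positivity
  · rw [hCup 0 (by simp), hCup Real.pi (by simp)]
    intro h
    have := congrArg Prod.fst h
    simp [arcC] at this
    linarith

lemma localize {U : Set (ℝ × ℝ)} (hU : IsOpen U) {X : ℝ × ℝ → ℝ × ℝ} (hX : ContDiffOn ℝ 1 X U)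
    {r : ℝ} (hr : 0 < r) (hrU : Metric.closedBall (0 : ℝ × ℝ) r ⊆ U) (hX0 : X 0 = 0)
    {δ : ℝ} (hδ : 0 < δ) :
    ∃ δ' > 0, ∀ F : ℝ × ℝ → ℝ × ℝ, ContDiff ℝ 1 F → ∀ s > 0,
      (∀ q ∈ Metric.closedBall (0 : ℝ × ℝ) s, ‖fderiv ℝ F q - fderiv ℝ X 0‖ ≤ δ') →
      ∃ c0 > 0, ∀ c, 0 < c → c < c0 → ∃ Xt : ℝ × ℝ → ℝ × ℝ, ContDiffOn ℝ 1 Xt U ∧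
        (∀ p ∈ Metric.closedBall (0 : ℝ × ℝ) r,
          ‖X p - Xt p‖ + ‖fderiv ℝ X p - fderiv ℝ Xt p‖ < δ) ∧
        ∀ p ∈ Metric.ball (0 : ℝ × ℝ) (c * s / 2), Xt p = c • F (c⁻¹ • p) := by
  let χ : ContDiffBump (0 : ℝ × ℝ) := ⟨1 / 2, 1, by norm_num, by norm_num⟩
  have hχ : ContDiff ℝ 1 χ := χ.contDiff
  have hχ1 : ∀ q : ℝ × ℝ, ‖q‖ ≤ 1 / 2 → χ q = 1 := fun q hq =>
    χ.one_of_mem_closedBall (by simpa [χ] using hq)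
  have hχ0 : ∀ q : ℝ × ℝ, 1 ≤ ‖q‖ → χ q = 0 := fun q hq =>
    χ.zero_of_le_dist (by simpa [χ] using hq)
  obtain ⟨C, hC⟩ := (hχ.continuous_fderiv one_ne_zero).bounded_above_of_compact_support
    (χ.hasCompactSupport.fderiv (𝕜 := ℝ))
  have hC0 : 0 ≤ C := (norm_nonneg _).trans (hC 0)
  have h0U : (0 : ℝ × ℝ) ∈ U := hrU (by simp [hr.le])
  have hXd : ∀ p ∈ U, DifferentiableAt ℝ X p := fun p hp =>
    (hX.contDiffAt (hU.mem_nhds hp)).differentiableAt one_ne_zero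
  set δ' := δ / (8 * (C + 2)) with hδ'
  have hδ'0 : 0 < δ' := by positivity
  refine ⟨δ', hδ'0, ?_⟩
  intro F hF s hs hFs
  have hFd : ∀ q, DifferentiableAt ℝ F q := fun q => hF.differentiable one_ne_zero q
  -- continuity of the derivative of X
  have hcont : ContinuousAt (fderiv ℝ X) 0 :=
    (hX.continuousOn_fderiv_of_isOpen hU le_rfl).continuousAt (hU.mem_nhds h0U)
  obtain ⟨ρ0, hρ0, hXρ⟩ := Metric.continuousAt_iff.1 hcont δ' hδ'0
  refine ⟨min (min (ρ0 / s) (r / s)) (min (1 / s) (δ / 2 / (‖F 0‖ + 1))), by positivity, ?_⟩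
  intro c hc hcc
  rw [lt_min_iff, lt_min_iff, lt_min_iff, lt_div_iff₀ hs, lt_div_iff₀ hs, lt_div_iff₀ hs,
    lt_div_iff₀ (by positivity)] at hcc
  obtain ⟨⟨hc1, hc2⟩, hc3, hc4⟩ := hcc
  set ρ := c * s with hρ
  have hρpos : 0 < ρ := by positivity
  set E : ℝ × ℝ → ℝ × ℝ := fun p => c • F (c⁻¹ • p) - c • F 0 - X p with hE
  have hEU : ContDiffOn ℝ 1 E U := by
    refine ContDiffOn.sub (ContDiff.contDiffOn ?_) hX
    exact ((hF.comp (contDiff_const_smul c⁻¹)).const_smul c).sub contDiff_const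
  have hED : ∀ p ∈ U, HasFDerivAt E (fderiv ℝ F (c⁻¹ • p) - fderiv ℝ X p) p := by
    intro p hp
    have h1 : HasFDerivAt (fun p : ℝ × ℝ => c⁻¹ • p)
      (c⁻¹ • ContinuousLinearMap.id ℝ (ℝ × ℝ)) p := (hasFDerivAt_id p).const_smul c⁻¹
    have h2 := (((hFd (c⁻¹ • p)).hasFDerivAt.comp p h1).const_smul c).sub_const (c • F 0)
    have h3 := h2.sub (hXd p hp).hasFDerivAt
    refine HasFDerivAt.congr_fderiv (f := E) h3 ?_
    ext v <;> simp [hc.ne']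
  have hEDn : ∀ p ∈ Metric.closedBall (0 : ℝ × ℝ) ρ,
      ‖fderiv ℝ F (c⁻¹ • p) - fderiv ℝ X p‖ ≤ 2 * δ' := by
    intro p hp
    rw [mem_closedBall_zero_iff] at hp
    have h1 := hFs (c⁻¹ • p) (by
      rw [mem_closedBall_zero_iff, norm_smul, norm_inv, Real.norm_of_nonneg hc.le,
        inv_mul_le_iff₀ hc]
      exact hp)
    have h2 := hXρ (show dist p 0 < ρ0 by rw [dist_zero_right]; linarith)
    rw [dist_eq_norm] at h2
    calc _ = ‖(fderiv ℝ F (c⁻¹ • p) - fderiv ℝ X 0) - (fderiv ℝ X p - fderiv ℝ X 0)‖ := by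
            congr 1; abel
      _ ≤ _ := norm_sub_le _ _
      _ ≤ 2 * δ' := by linarith
  have hsub : Metric.closedBall (0 : ℝ × ℝ) ρ ⊆ U :=
    (Metric.closedBall_subset_closedBall hc2.le).trans hrU
  have hE0 : E 0 = 0 := by simp [hE, hX0]
  have hEn : ∀ p ∈ Metric.closedBall (0 : ℝ × ℝ) ρ, ‖E p‖ ≤ 2 * δ' * ρ := by
    intro p hp
    have := Convex.norm_image_sub_le_of_norm_fderiv_le (𝕜 := ℝ) (f := E) (C := 2 * δ')
      (s := Metric.closedBall (0 : ℝ × ℝ) ρ) (x := 0) (y := p)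
      (fun q hq => (hED q (hsub hq)).differentiableAt)
      (fun q hq => by rw [(hED q (hsub hq)).fderiv]; exact hEDn q hq)
      (convex_closedBall _ _) (by simp [hρpos.le]) hp
    rw [hE0, sub_zero, sub_zero] at this
    rw [mem_closedBall_zero_iff] at hp
    exact this.trans (by gcongr)
  set χρ : ℝ × ℝ → ℝ := fun p => χ (ρ⁻¹ • p) with hχρ
  have hχρc : ContDiff ℝ 1 χρ := hχ.comp (contDiff_const_smul ρ⁻¹)
  have hnrm : ∀ p : ℝ × ℝ, ‖ρ⁻¹ • p‖ = ρ⁻¹ * ‖p‖ := fun p => by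
    rw [norm_smul, norm_inv, Real.norm_of_nonneg hρpos.le]
  refine ⟨fun p => X p + c • F 0 + χρ p • E p, ?_, ?_, ?_⟩
  · exact (hX.add contDiffOn_const).add (hχρc.contDiffOn.smul hEU)
  · intro p hp
    have hpU := hrU hp
    have hv : ‖c • F 0‖ < δ / 2 := by
      rw [norm_smul, Real.norm_of_nonneg hc.le]
      nlinarith [norm_nonneg (F 0)]
    by_cases hpρ : p ∈ Metric.closedBall (0 : ℝ × ℝ) ρ
    · have hd1 : HasFDerivAt χρ ((fderiv ℝ χ (ρ⁻¹ • p)).comp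
          (ρ⁻¹ • ContinuousLinearMap.id ℝ (ℝ × ℝ))) p := by
        have h1 : HasFDerivAt (fun p : ℝ × ℝ => ρ⁻¹ • p)
          (ρ⁻¹ • ContinuousLinearMap.id ℝ (ℝ × ℝ)) p := (hasFDerivAt_id p).const_smul ρ⁻¹
        exact ((hχ.differentiable one_ne_zero) (ρ⁻¹ • p)).hasFDerivAt.comp p h1
      set Dχ := (fderiv ℝ χ (ρ⁻¹ • p)).comp (ρ⁻¹ • ContinuousLinearMap.id ℝ (ℝ × ℝ)) with hDχ
      have hDχn : ‖Dχ‖ ≤ C * ρ⁻¹ := by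
        rw [hDχ, ContinuousLinearMap.comp_smul, ContinuousLinearMap.comp_id, norm_smul, norm_inv,
          Real.norm_of_nonneg hρpos.le, mul_comm]
        gcongr
        exact hC _
      have hd2 := hd1.smul (hED p hpU)
      have hd3 := ((hXd p hpU).hasFDerivAt.add_const (c • F 0)).add hd2
      have hd4 : fderiv ℝ (fun p => X p + c • F 0 + χρ p • E p) p = _ := hd3.fderiv
      rw [hd4]
      have hχle : ‖χρ p‖ ≤ 1 := by
        rw [Real.norm_of_nonneg χ.nonneg]
        exact χ.le_one
      have e1 : X p - (X p + c • F 0 + χρ p • E p) = -(c • F 0 + χρ p • E p) := by abel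
      have b1 : ‖χρ p • E p‖ ≤ 2 * δ' * ρ := by
        rw [norm_smul]
        calc _ ≤ 1 * (2 * δ' * ρ) := by
              gcongr
              exact hEn p hpρ
          _ = _ := one_mul _
      have b2 : ‖χρ p • (fderiv ℝ F (c⁻¹ • p) - fderiv ℝ X p)‖ ≤ 2 * δ' := by
        rw [norm_smul]
        calc _ ≤ 1 * (2 * δ') := by
              gcongr
              exact hEDn p hpρ
          _ = _ := one_mul _
      have b3 : ‖Dχ.smulRight (E p)‖ ≤ 2 * δ' * C := by
        rw [ContinuousLinearMap.norm_smulRight_apply]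
        calc _ ≤ (C * ρ⁻¹) * (2 * δ' * ρ) := by
              gcongr
              exact hEn p hpρ
          _ = _ := by field_simp
      have b4 : 2 * δ' * ρ ≤ 2 * δ' * 1 := by gcongr
      have b5 : 2 * δ' * (C + 2) = δ / 4 := by
        rw [hδ']
        field_simp
        norm_num
      rw [e1, norm_neg, sub_add_cancel_left, norm_neg]
      have t1 := norm_add_le (c • F 0) (χρ p • E p)
      have t2 := norm_add_le (χρ p • (fderiv ℝ F (c⁻¹ • p) - fderiv ℝ X p)) (Dχ.smulRight (E p))
      linarith
    · have hlt : ρ < ‖p‖ := by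
        rw [mem_closedBall_zero_iff] at hpρ
        exact not_le.1 hpρ
      have hz : ∀ q : ℝ × ℝ, ρ < ‖q‖ → χρ q = 0 := by
        intro q hq
        apply hχ0
        rw [hnrm, ← div_eq_inv_mul, le_div_iff₀ hρpos]
        linarith
      have he : (fun p => X p + c • F 0 + χρ p • E p) =ᶠ[nhds p] fun p => X p + c • F 0 := by
        filter_upwards [continuous_norm.continuousAt.eventually (lt_mem_nhds hlt)] with q hq
        rw [hz q hq]; simp
      rw [he.fderiv_eq, fderiv_add_const]
      simp only [hz p hlt, zero_smul, add_zero, sub_add_cancel_left, norm_neg, sub_self, norm_zero]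
      linarith
  · intro p hp
    rw [mem_ball_zero_iff] at hp
    have : χρ p = 1 := by
      apply hχ1
      rw [hnrm, ← div_eq_inv_mul, div_le_iff₀ hρpos]
      linarith
    simp only [this, one_smul, hE]
    abel

/-- The scaled linear factor. -/
def P1 (X : ℝ × ℝ → ℝ × ℝ) (q : ℝ × ℝ) : ℝ :=
  -1 + (jac11 X + jac22 X) * q.1 + jac12 X * q.2

/-- The scaled model. -/
def mX (X : ℝ × ℝ → ℝ × ℝ) (η ξ : ℝ) : ℝ × ℝ → ℝ × ℝ :=
  md (jac22 X) (jac21 X / 2) η ξ (P1 X)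

lemma mX_contDiff (X : ℝ × ℝ → ℝ × ℝ) (η ξ : ℝ) : ContDiff ℝ 1 (mX X η ξ) := by
  unfold mX md P1
  fun_prop

lemma mX_eq (X : ℝ × ℝ → ℝ × ℝ) (η ξ : ℝ) :
    mX X η ξ = fun q => mX X η 0 q + (0, -(η * (jac21 X / 2) * ξ ^ 2)) := by
  funext q
  unfold mX md
  ext
  · simp
  · simp; ring

lemma mX_fderiv_zero (X : ℝ × ℝ → ℝ × ℝ) {η : ℝ} (hη : 0 ≤ η) :
    ‖fderiv ℝ (mX X η 0) 0 - fderiv ℝ X 0‖ ≤ η := by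
  have h1 : HasFDerivAt (fun p : ℝ × ℝ => p.1) (ContinuousLinearMap.fst ℝ ℝ ℝ) (0 : ℝ × ℝ) :=
    hasFDerivAt_fst
  have h2 : HasFDerivAt (fun p : ℝ × ℝ => p.2) (ContinuousLinearMap.snd ℝ ℝ ℝ) (0 : ℝ × ℝ) :=
    hasFDerivAt_snd
  have hP : HasFDerivAt (P1 X) ((jac11 X + jac22 X) • ContinuousLinearMap.fst ℝ ℝ ℝ +
      jac12 X • ContinuousLinearMap.snd ℝ ℝ ℝ) (0 : ℝ × ℝ) :=
    ((h1.const_mul _).const_add (-1)).add (h2.const_mul _)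
  have hD := (h1.const_mul (jac22 X)).const_add 1
  have hW := (hD.mul h2).sub (((hasFDerivAt_const ((0:ℝ) ^ 2) (0 : ℝ × ℝ)).sub (h1.pow 2)).const_mul
    (jac21 X / 2))
  have hL := (h2.const_mul (jac22 X)).add (h1.const_mul (2 * (jac21 X / 2)))
  have hall : HasFDerivAt (mX X η 0) _ 0 := (hD.mul hP).prodMk ((hW.const_mul η).sub (hL.mul hP))
  refine ContinuousLinearMap.opNorm_le_bound _ hη (fun v => ?_)
  have hv : fderiv ℝ X 0 v = v.1 • fderiv ℝ X 0 (1, 0) + v.2 • fderiv ℝ X 0 (0, 1) := by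
    rw [← map_smul, ← map_smul, ← map_add]
    congr 1
    ext <;> simp
  have hfin : (fderiv ℝ (mX X η 0) 0 - fderiv ℝ X 0) v = (0, η * v.2) := by
    have j11 : (fderiv ℝ X 0 (1, 0)).1 = jac11 X := rfl
    have j12 : (fderiv ℝ X 0 (0, 1)).1 = jac12 X := rfl
    have j21 : (fderiv ℝ X 0 (1, 0)).2 = jac21 X := rfl
    have j22 : (fderiv ℝ X 0 (0, 1)).2 = jac22 X := rfl
    rw [hall.fderiv, ContinuousLinearMap.sub_apply, hv]
    ext
    · simp [P1, j11, j12, j21, j22]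
      ring
    · simp [P1, j11, j12, j21, j22]
      ring
  rw [hfin, Prod.norm_def]
  simp only [norm_zero, norm_mul, Real.norm_of_nonneg hη]
  have : ‖v.2‖ ≤ ‖v‖ := norm_snd_le v
  rw [max_le_iff]
  exact ⟨by positivity, by gcongr⟩

lemma mX_local (X : ℝ × ℝ → ℝ × ℝ) {η δ' : ℝ} (hη : 0 ≤ η) (hηδ : η < δ') :
    ∀ᶠ q in nhds (0 : ℝ × ℝ), (∀ ξ, ‖fderiv ℝ (mX X η ξ) q - fderiv ℝ X 0‖ ≤ δ') ∧
      P1 X q < 0 ∧ 1 / 2 ≤ 1 + jac22 X * q.1 := by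
  have c1 : Continuous fun q => ‖fderiv ℝ (mX X η 0) q - fderiv ℝ X 0‖ :=
    (((mX_contDiff X η 0).continuous_fderiv one_ne_zero).sub continuous_const).norm
  have c2 : Continuous (P1 X) := by unfold P1; fun_prop
  have c3 : Continuous fun q : ℝ × ℝ => 1 + jac22 X * q.1 := by fun_prop
  have e1 := c1.continuousAt.eventually (gt_mem_nhds ((mX_fderiv_zero X hη).trans_lt hηδ))
  have e2 := c2.continuousAt.eventually (gt_mem_nhds (show P1 X 0 < 0 by simp [P1]))
  have e3 := c3.continuousAt.eventually
    (lt_mem_nhds (show 1 / 2 < 1 + jac22 X * (0 : ℝ × ℝ).1 by norm_num))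
  filter_upwards [e1, e2, e3] with q h1 h2 h3
  refine ⟨fun ξ => ?_, h2, h3.le⟩
  rw [mX_eq, fderiv_add_const]
  exact h1.le

lemma md_scale (ν κ η ξ c : ℝ) (hc : c ≠ 0) (P : ℝ × ℝ → ℝ) (p : ℝ × ℝ) :
    c • md ν κ η ξ P (c⁻¹ • p) =
      md (ν / c) (κ / c) η (c * ξ) (fun p => c * P (c⁻¹ • p)) p := by
  unfold md
  ext
  · simp only [Prod.smul_fst, Prod.smul_snd, smul_eq_mul]
    field_simp
  · simp only [Prod.smul_fst, Prod.smul_snd, smul_eq_mul]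
    field_simp

lemma Side_scale {ν κ η ξ c s : ℝ} {P : ℝ × ℝ → ℝ} (hc : 0 < c) (hκ : 0 < κ) (hη : 0 < η)
    (hξ : 0 < ξ) (hξs : 2 * ξ < s) (hξs' : 4 * κ * ξ ^ 2 < s) (hP : Continuous P)
    (hs : ∀ q ∈ Metric.closedBall (0 : ℝ × ℝ) s, P q < 0 ∧ 1 / 2 ≤ 1 + ν * q.1) :
    Side (ν / c) (κ / c) η (c * ξ) (c * s / 2) (fun p => c * P (c⁻¹ • p)) := by
  have hmem : ∀ p ∈ Metric.ball (0 : ℝ × ℝ) (c * s / 2),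
      c⁻¹ • p ∈ Metric.closedBall (0 : ℝ × ℝ) s := by
    intro p hp
    rw [mem_ball_zero_iff] at hp
    rw [mem_closedBall_zero_iff, norm_smul, norm_inv, Real.norm_of_nonneg hc.le,
      inv_mul_le_iff₀ hc]
    have : 0 < c * s := by nlinarith
    linarith
  refine ⟨by positivity, hη, by positivity, by nlinarith, ?_, ?_, by fun_prop, ?_⟩
  · have : 2 * (κ / c) * (c * ξ) ^ 2 = c * (4 * κ * ξ ^ 2) / 2 := by field_simp; ring
    rw [this]
    gcongr
  · intro x hx
    have := (hs _ (hmem (x, 0) (by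
      rw [mem_ball_prod]
      exact ⟨hx, by simpa using (abs_nonneg x).trans_lt hx⟩))).2
    simp only [Prod.smul_fst, smul_eq_mul] at this
    rw [show ν / c * x = ν * (c⁻¹ * x) by field_simp]
    exact this
  · intro p hp
    exact mul_neg_of_pos_of_neg hc (hs _ (hmem p hp)).1

lemma main_pos {U : Set (ℝ × ℝ)} (hU : IsOpen U) {X Y : ℝ × ℝ → ℝ × ℝ}
    (hX : ContDiffOn ℝ 1 X U) (hY : ContDiffOn ℝ 1 Y U)
    {r : ℝ} (hr : 0 < r) (hrU : Metric.closedBall (0 : ℝ × ℝ) r ⊆ U) (hX0 : X 0 = 0)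
    (hY0 : Y 0 = 0) (hjX : 0 < jac21 X) (hjY : 0 < jac21 Y) {δ : ℝ} (hδ : 0 < δ) :
    ∃ Xt Yt : ℝ × ℝ → ℝ × ℝ,
        ContDiffOn ℝ 1 Xt U ∧ ContDiffOn ℝ 1 Yt U ∧
        (∀ p ∈ Metric.closedBall (0 : ℝ × ℝ) r,
          ‖X p - Xt p‖ + ‖fderiv ℝ X p - fderiv ℝ Xt p‖ < δ) ∧
        (∀ p ∈ Metric.closedBall (0 : ℝ × ℝ) r,
          ‖Y p - Yt p‖ + ‖fderiv ℝ Y p - fderiv ℝ Yt p‖ < δ) ∧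
        ∃ γ : ℝ → ℝ × ℝ, IsCrossingPeriodicOrbit Xt Yt γ ∧
          Set.range γ ⊆ Metric.ball (0 : ℝ × ℝ) δ ∧
          ∃ V : Set (ℝ × ℝ), IsOpen V ∧ Set.range γ ⊆ V ∧
            ∀ γ' : ℝ → ℝ × ℝ, IsCrossingPeriodicOrbit Xt Yt γ' →
              Set.range γ' ⊆ V → Set.range γ' = Set.range γ := by
  obtain ⟨δ1, hδ1, H1⟩ := localize hU hX hr hrU hX0 hδ
  obtain ⟨δ2, hδ2, H2⟩ := localize hU hY hr hrU hY0 hδ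
  obtain ⟨η, hη, hη12⟩ := exists_between (lt_min hδ1 hδ2)
  rw [lt_min_iff] at hη12
  obtain ⟨s, hs, hsq⟩ := (Metric.nhds_basis_closedBall.eventually_iff).1
    ((mX_local X hη.le hη12.1).and (mX_local Y hη.le hη12.2))
  have hξ : ∃ ξ > 0, 2 * ξ < s ∧ 4 * (jac21 X / 2) * ξ ^ 2 < s ∧ 4 * (jac21 Y / 2) * ξ ^ 2 < s := by
    have c1 : Continuous fun ξ : ℝ => 2 * ξ := by fun_prop
    have c2 : Continuous fun ξ : ℝ => 4 * (jac21 X / 2) * ξ ^ 2 := by fun_prop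
    have c3 : Continuous fun ξ : ℝ => 4 * (jac21 Y / 2) * ξ ^ 2 := by fun_prop
    have e1 := (c1.continuousAt (x := 0)).eventually
      (gt_mem_nhds (show 2 * (0 : ℝ) < s by simpa using hs))
    have e2 := (c2.continuousAt (x := 0)).eventually
      (gt_mem_nhds (show 4 * (jac21 X / 2) * (0 : ℝ) ^ 2 < s by simpa using hs))
    have e3 := (c3.continuousAt (x := 0)).eventually
      (gt_mem_nhds (show 4 * (jac21 Y / 2) * (0 : ℝ) ^ 2 < s by simpa using hs))
    obtain ⟨ε, hε, h⟩ := Metric.eventually_nhds_iff.1 (e1.and (e2.and e3))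
    exact ⟨ε / 2, by positivity, h (by
      rw [dist_zero_right, Real.norm_of_nonneg (by positivity)]; linarith)⟩
  obtain ⟨ξ, hξ0, hξ1, hξ2, hξ3⟩ := hξ
  have hfneg : ∀ q, fderiv ℝ (fun q => -mX Y η ξ (-q)) q = fderiv ℝ (mX Y η ξ) (-q) := by
    intro q
    have h1 : HasFDerivAt (fun q : ℝ × ℝ => -q) (-ContinuousLinearMap.id ℝ (ℝ × ℝ)) q :=
      (hasFDerivAt_id q).neg
    have h2 := ((((mX_contDiff Y η ξ).differentiable one_ne_zero (-q)).hasFDerivAt).comp q h1).neg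
    have h3 : fderiv ℝ (fun q => -mX Y η ξ (-q)) q = _ := h2.fderiv
    rw [h3]
    ext v <;> simp
  obtain ⟨c1, hc1, H1⟩ := H1 (mX X η ξ) (mX_contDiff X η ξ) s hs
    (fun q hq => (hsq hq).1.1 ξ)
  obtain ⟨c2, hc2, H2⟩ := H2 (fun q => -mX Y η ξ (-q))
    ((mX_contDiff Y η ξ).comp contDiff_neg).neg s hs
    (fun q hq => by
      rw [hfneg]
      exact (hsq (show -q ∈ _ by simpa using hq)).2.1 ξ)
  obtain ⟨c, hc, hcc⟩ := exists_between (lt_min (lt_min hc1 hc2) (show 0 < 2 * δ / s by positivity))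
  rw [lt_min_iff, lt_min_iff, lt_div_iff₀ hs] at hcc
  obtain ⟨Xt, hXt1, hXt2, hXt3⟩ := H1 c hc hcc.1.1
  obtain ⟨Yt, hYt1, hYt2, hYt3⟩ := H2 c hc hcc.1.2
  refine ⟨Xt, Yt, hXt1, hYt1, hXt2, hYt2, ?_⟩
  have S1 : Side (jac22 X / c) (jac21 X / 2 / c) η (c * ξ) (c * s / 2)
      (fun p => c * P1 X (c⁻¹ • p)) :=
    Side_scale hc (by positivity) hη hξ0 hξ1 hξ2 (by unfold P1; fun_prop)
      (fun q hq => (hsq hq).1.2)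
  have S2 : Side (jac22 Y / c) (jac21 Y / 2 / c) η (c * ξ) (c * s / 2)
      (fun p => c * P1 Y (c⁻¹ • p)) :=
    Side_scale hc (by positivity) hη hξ0 hξ1 hξ3 (by unfold P1; fun_prop)
      (fun q hq => (hsq hq).2.2)
  obtain ⟨γ, hγ, hγr, hγu⟩ := dynamics (X := Xt) (Y := Yt) S1 S2
    (fun p hp => by rw [hXt3 p hp, mX, md_scale _ _ _ _ _ hc.ne'])
    (fun p hp => by
      rw [hYt3 p hp, mX, ← md_scale _ _ _ _ _ hc.ne', smul_neg, smul_neg])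
  exact ⟨γ, hγ, hγr.trans (Metric.ball_subset_ball (by linarith)), _, Metric.isOpen_ball, hγr, hγu⟩

lemma IsCrossingPeriodicOrbit.rev {X Y : ℝ × ℝ → ℝ × ℝ} {γ : ℝ → ℝ × ℝ}
    (h : IsCrossingPeriodicOrbit X Y γ) :
    IsCrossingPeriodicOrbit (fun p => -X p) (fun p => -Y p) (fun t => γ (-t)) := by
  obtain ⟨hc, ⟨T, hT, hper⟩, ⟨t, s, hts⟩, hdX, hdY, hd, hcr⟩ := h
  have hrev : ∀ {t v}, HasDerivAt γ v (-t) → HasDerivAt (fun t => γ (-t)) (-v) t := by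
    intro t v h
    have := h.scomp t (hasDerivAt_neg t)
    exact HasDerivAt.congr_deriv (f := fun t => γ (-t)) this (by simp)
  refine ⟨hc.comp continuous_neg, ⟨T, hT, fun t => ?_⟩, ⟨-t, -s, by simpa using hts⟩,
    ?_, ?_, ?_, ?_⟩
  · show γ (-(t + T)) = γ (-t)
    rw [← hper (-(t + T))]
    congr 1
    ring
  · intro t ht
    exact hrev (hdX (-t) ht)
  · intro t ht
    exact hrev (hdY (-t) ht)
  · intro t ht
    obtain ⟨ε, hε, h1⟩ := hd (-t) ht
    refine ⟨ε, hε, fun s a b => h1 (-s) (by simpa using a) ?_⟩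
    rw [← abs_neg]
    convert b using 2
    ring
  · intro t ht
    have := hcr (-t) ht
    simp only [Prod.snd_neg]
    linarith

lemma range_rev (γ : ℝ → ℝ × ℝ) : Set.range (fun t => γ (-t)) = Set.range γ :=
  neg_surjective.range_comp γ

/-- For every `Z = (X, Y) ∈ Ω₀` and every `δ > 0` there is a `C¹`-`δ`-small perturbation
`Z̃ = (X̃, Ỹ)` of `Z` (measured on a fixed closed ball around the origin) possessing an
isolated crossing periodic orbit — a crossing limit cycle — inside the ball of radius `δ`
around the origin. -/
theorem stmt19 (U : Set (ℝ × ℝ)) (X Y : ℝ × ℝ → ℝ × ℝ) (hZ : InOmega0 U X Y) :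
    ∃ r > (0 : ℝ), Metric.closedBall ((0, 0) : ℝ × ℝ) r ⊆ U ∧
      ∀ δ : ℝ, 0 < δ → ∃ Xt Yt : ℝ × ℝ → ℝ × ℝ,
        ContDiffOn ℝ 1 Xt U ∧ ContDiffOn ℝ 1 Yt U ∧
        (∀ p ∈ Metric.closedBall ((0, 0) : ℝ × ℝ) r,
          ‖X p - Xt p‖ + ‖fderiv ℝ X p - fderiv ℝ Xt p‖ < δ) ∧
        (∀ p ∈ Metric.closedBall ((0, 0) : ℝ × ℝ) r,
          ‖Y p - Yt p‖ + ‖fderiv ℝ Y p - fderiv ℝ Yt p‖ < δ) ∧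
        ∃ γ : ℝ → ℝ × ℝ, IsCrossingPeriodicOrbit Xt Yt γ ∧
          Set.range γ ⊆ Metric.ball ((0, 0) : ℝ × ℝ) δ ∧
          ∃ V : Set (ℝ × ℝ), IsOpen V ∧ Set.range γ ⊆ V ∧
            ∀ γ' : ℝ → ℝ × ℝ, IsCrossingPeriodicOrbit Xt Yt γ' →
              Set.range γ' ⊆ V → Set.range γ' = Set.range γ := by
  obtain ⟨hU, h0, hX, hY, hX0, hY0, -, hj⟩ := hZ
  have hX0' : X 0 = 0 := hX0
  have hY0' : Y 0 = 0 := hY0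
  obtain ⟨r, hr, hrU⟩ := Metric.nhds_basis_closedBall.mem_iff.1 (hU.mem_nhds h0)
  refine ⟨r, hr, hrU, fun δ hδ => ?_⟩
  rcases pos_and_pos_or_neg_and_neg_of_mul_pos hj with ⟨h1, h2⟩ | ⟨h1, h2⟩
  · exact main_pos hU hX hY hr hrU hX0 hY0 h1 h2 hδ
  · have hn : ∀ W : ℝ × ℝ → ℝ × ℝ, ∀ p, fderiv ℝ (fun p => -W p) p = -fderiv ℝ W p :=
      fun W p => fderiv_fun_neg
    have hjn : ∀ W : ℝ × ℝ → ℝ × ℝ, jac21 (fun p => -W p) = -jac21 W := by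
      intro W
      simp [jac21, hn]
    obtain ⟨Xt, Yt, a1, a2, a3, a4, γ, a5, a6, V, a7, a8, a9⟩ :=
      main_pos hU (X := fun p => -X p) (Y := fun p => -Y p) hX.neg hY.neg hr hrU
        (by simp [hX0']) (by simp [hY0']) (by rw [hjn]; linarith) (by rw [hjn]; linarith) hδ
    have hcl : ∀ W Wt : ℝ × ℝ → ℝ × ℝ, ∀ p,
        ‖-W p - Wt p‖ + ‖fderiv ℝ (fun p => -W p) p - fderiv ℝ Wt p‖ < δ →
        ‖W p - -Wt p‖ + ‖fderiv ℝ W p - fderiv ℝ (fun p => -Wt p) p‖ < δ := by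
      intro W Wt p h
      rw [hn] at h ⊢
      have e1 : W p - -Wt p = -(-W p - Wt p) := by abel
      have e2 : fderiv ℝ W p - -fderiv ℝ Wt p = -(-fderiv ℝ W p - fderiv ℝ Wt p) := by abel
      rw [e1, e2, norm_neg, norm_neg]
      exact h
    refine ⟨fun p => -Xt p, fun p => -Yt p, a1.neg, a2.neg, fun p hp => hcl X Xt p (a3 p hp),
      fun p hp => hcl Y Yt p (a4 p hp), fun t => γ (-t), a5.rev, ?_, V, a7, ?_, ?_⟩
    · rw [range_rev]; exact a6
    · rw [range_rev]; exact a8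
    · intro γ' h' hr'
      have h3 := h'.rev
      simp only [neg_neg] at h3
      have h4 := a9 _ h3 (by rw [range_rev]; exact hr')
      rw [range_rev] at h4 ⊢
      exact h4
end
end
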